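/- (Inverse theorem for the Gowers-3 norm of quantum states.) There exist universal constants c > 0 and C ≥ 1 such that the following holds. For every n ≥ 1, every γ ∈ (0,1], and every amplitude vector f with characteristic distribution p, if 2ⁿ · ∑_{x ∈ 𝔽₂^{2n}} p(x)² ≥ γ (i.e., the eighth power of the Gowers-3 norm of the state is at least γ), then there exists a Lagrangian subspace L ⊆ 𝔽₂^{2n} such that ∑_{x ∈ L} p(x) ≥ c·γ^C. (The quantity ∑_{x ∈ L} p(x) is a lower bound on the squared fidelity of the state with some stabilizer state.) -/

import Mathlib

open Finset

/-- The characteristic distribution of an amplitude vector `f : 𝔽₂ⁿ → ℂ`. -/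
noncomputable def charDist (n : ℕ) (f : (Fin n → ZMod 2) → ℂ) :
    (Fin n → ZMod 2) × (Fin n → ZMod 2) → ℝ :=
  fun x =>
    ((2 : ℝ) ^ n)⁻¹ *
      ‖∑ y : Fin n → ZMod 2,
          f y * (starRingEnd ℂ) (f (y + x.1)) *
            (-1 : ℂ) ^ (∑ i, x.2 i * y i : ZMod 2).val‖ ^ 2

/-- The symplectic product on `𝔽₂^{2n}`: `[x,y] = ⟨x₁,y₂⟩ + ⟨x₂,y₁⟩`. -/
def sympl (n : ℕ) (x y : (Fin n → ZMod 2) × (Fin n → ZMod 2)) : ZMod 2 :=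
  (∑ i, x.1 i * y.2 i) + (∑ i, x.2 i * y.1 i)

/-- A Lagrangian subspace of `𝔽₂^{2n}`. -/
def IsLagrangian (n : ℕ)
    (L : Submodule (ZMod 2) ((Fin n → ZMod 2) × (Fin n → ZMod 2))) : Prop :=
  Module.finrank (ZMod 2) L = n ∧ ∀ x ∈ L, ∀ y ∈ L, sympl n x y = 0

/-!
Write `b x` for the squared Weyl coefficients `2ⁿ p x` of the state. The distribution `b` is, up to
scaling, its own symplectic Fourier transform, so `∑ b x * b y * b (x + y)` is a multiple of the
sixth moment of the coefficients. If the fourth moment (the Gowers norm) is large, then by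
Cauchy–Schwarz so is the sixth, and the set `A` of points where `b` is not small contains many
triples `x`, `y`, `x + y`.

The entropic forms of the Balog–Szemerédi–Gowers and polynomial Freiman–Ruzsa theorems over `𝔽₂`
turn this into a subspace `V`, of size comparable to `A`, on which `b` has large mass. An
uncertainty principle, which is Cauchy–Schwarz for the vectors `(W ⊗ W) (f ⊗ f)` with `W` a Weyl
operator labelled by a point of `V`, moves this mass to the isotropic subspace `V ∩ V^⊥`, and any
Lagrangian subspace containing it will do.
-/

/-- The joint variable of `X` and `Y`. -/
local notation "⟪" X "," Y "⟫" => fun ω => (X ω, Y ω)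

section Law

variable {Ω α β γ : Type*} [Fintype Ω]

open scoped Classical in
/-- The law of a random variable `X` under a weight `μ` on a finite sample space. A probability
measure is a `μ ∈ stdSimplex ℝ Ω`. -/
noncomputable def law (μ : Ω → ℝ) (X : Ω → α) (a : α) : ℝ := ∑ ω with X ω = a, μ ω

lemma sum_law_mul [Fintype α] (μ : Ω → ℝ) (X : Ω → α) (F : α → ℝ) :
    ∑ a, law μ X a * F a = ∑ ω, μ ω * F (X ω) := by
  classical
  simp only [law, sum_mul, sum_filter, ite_mul, zero_mul]
  rw [sum_comm]
  simp

lemma sum_law [Fintype α] (μ : Ω → ℝ) (X : Ω → α) : ∑ a, law μ X a = ∑ ω, μ ω := by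
  simpa using sum_law_mul μ X 1

lemma law_nonneg {μ : Ω → ℝ} (hμ : ∀ ω, 0 ≤ μ ω) (X : Ω → α) (a : α) : 0 ≤ law μ X a :=
  sum_nonneg fun ω _ => hμ ω

lemma law_mem_stdSimplex [Fintype α] {μ : Ω → ℝ} (hμ : μ ∈ stdSimplex ℝ Ω) (X : Ω → α) :
    law μ X ∈ stdSimplex ℝ α :=
  ⟨law_nonneg hμ.1 X, (sum_law μ X).trans hμ.2⟩

lemma law_law [Fintype α] (μ : Ω → ℝ) (X : Ω → α) (φ : α → β) :
    law (law μ X) φ = law μ (φ ∘ X) := by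
  classical
  funext b
  simpa [law, sum_filter] using sum_law_mul μ X fun a => if φ a = b then 1 else 0

lemma law_id (μ : Ω → ℝ) : law μ id = μ := by
  classical
  funext ω
  simp [law, sum_filter]

lemma law_comp_injective (μ : Ω → ℝ) (X : Ω → α) {e : α → β} (he : Function.Injective e) (a : α) :
    law μ (e ∘ X) (e a) = law μ X a :=
  sum_congr (by ext; simp [he.eq_iff]) fun _ _ => rfl

lemma law_congr {μ : Ω → ℝ} {X Y : Ω → α} (h : ∀ ω, μ ω ≠ 0 → X ω = Y ω) :
    law μ X = law μ Y := by
  classical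
  funext a
  simp only [law, sum_filter]
  refine sum_congr rfl fun ω _ => ?_
  by_cases hω : μ ω = 0
  · simp [hω]
  · rw [h ω hω]

lemma law_le_law {μ : Ω → ℝ} (hμ : ∀ ω, 0 ≤ μ ω) {X : Ω → α} {Y : Ω → β} {a : α} {b : β}
    (h : ∀ ω, μ ω ≠ 0 → X ω = a → Y ω = b) : law μ X a ≤ law μ Y b := by
  classical
  simp only [law, sum_filter]
  refine sum_le_sum fun ω _ => ?_
  have := hμ ω
  have := h ω
  grind

lemma le_law {μ : Ω → ℝ} (hμ : ∀ ω, 0 ≤ μ ω) (X : Ω → α) (ω : Ω) : μ ω ≤ law μ X (X ω) := by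
  classical
  exact single_le_sum (fun ω' _ => hμ ω') (by simp)

lemma law_pos {μ : Ω → ℝ} (hμ : ∀ ω, 0 ≤ μ ω) (X : Ω → α) {ω : Ω} (hω : 0 < μ ω) :
    0 < law μ X (X ω) :=
  hω.trans_le (le_law hμ X ω)

lemma exists_of_law_ne_zero {μ : Ω → ℝ} {X : Ω → α} {a : α} (h : law μ X a ≠ 0) :
    ∃ ω, μ ω ≠ 0 ∧ X ω = a := by
  classical
  obtain ⟨ω, hω, hne⟩ := exists_ne_zero_of_sum_ne_zero h
  exact ⟨ω, hne, (mem_filter.1 hω).2⟩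

lemma sum_law_prod_right [Fintype β] (μ : Ω → ℝ) (X : Ω → α) (Y : Ω → β) (a : α) :
    ∑ b, law μ ⟪X, Y⟫ (a, b) = law μ X a := by
  classical
  simp only [law, Prod.mk.injEq, ← filter_filter]
  exact sum_fiberwise _ Y μ

lemma sum_law_prod_left [Fintype α] (μ : Ω → ℝ) (X : Ω → α) (Y : Ω → β) (b : β) :
    ∑ a, law μ ⟪X, Y⟫ (a, b) = law μ Y b := by
  classical
  simp only [law, Prod.mk.injEq, and_comm (b := Y _ = b), ← filter_filter]
  exact sum_fiberwise _ X μ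

lemma exists_le_of_weighted_sum_le {w F : Ω → ℝ} (hw : w ∈ stdSimplex ℝ Ω) {c : ℝ}
    (h : ∑ ω, w ω * F ω ≤ c) : ∃ ω, w ω ≠ 0 ∧ F ω ≤ c := by
  by_contra! hlt
  have hle (ω : Ω) : w ω * c ≤ w ω * F ω := by
    rcases (hw.1 ω).eq_or_lt with h0 | h0
    · simp [← h0]
    · exact mul_le_mul_of_nonneg_left (hlt ω h0.ne').le h0.le
  obtain ⟨ω₀, -, hω₀⟩ := exists_ne_zero_of_sum_ne_zero (hw.2.trans_ne one_ne_zero)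
  have hstrict : ∑ ω, w ω * c < ∑ ω, w ω * F ω :=
    sum_lt_sum (fun ω _ => hle ω) ⟨ω₀, mem_univ _,
      mul_lt_mul_of_pos_left (hlt ω₀ hω₀) ((hw.1 ω₀).lt_of_ne' hω₀)⟩
  rw [← sum_mul, hw.2, one_mul] at hstrict
  exact hstrict.not_ge h

end Law

section Entropy

variable {Ω α β : Type*} [Fintype Ω] [Fintype α] [Fintype β]

/-- The Shannon entropy (in nats) of a weight on a finite type. -/
noncomputable def entropy (p : α → ℝ) : ℝ := ∑ a, Real.negMulLog (p a)

/-- The Shannon entropy `H(X)` of a random variable. -/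
noncomputable def entropyOf (μ : Ω → ℝ) (X : Ω → α) : ℝ := entropy (law μ X)

/-- Independence of two random variables. -/
def IndepRV (μ : Ω → ℝ) (X : Ω → α) (Y : Ω → β) : Prop :=
  ∀ a b, law μ ⟪X, Y⟫ (a, b) = law μ X a * law μ Y b

lemma entropy_nonneg {p : α → ℝ} (hp : p ∈ stdSimplex ℝ α) : 0 ≤ entropy p :=
  sum_nonneg fun a _ => Real.negMulLog_nonneg (hp.1 a)
    (hp.2 ▸ single_le_sum (fun b _ => hp.1 b) (mem_univ a))

lemma entropy_eq_neg_log_of_flat {p : α → ℝ} (hp : p ∈ stdSimplex ℝ α) {c : ℝ}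
    (h : ∀ a, p a ≠ 0 → p a = c) : entropy p = -Real.log c := by
  have hterm (a : α) : Real.negMulLog (p a) = p a * -Real.log c := by
    rcases eq_or_ne (p a) 0 with h0 | h0
    · simp [h0]
    · rw [Real.negMulLog, h a h0]
      ring
  simp only [entropy, hterm, ← sum_mul, hp.2, one_mul]

lemma sum_mul_entropy_le_entropy_sum {w : Ω → ℝ} (hw : w ∈ stdSimplex ℝ Ω) {q : Ω → α → ℝ}
    (hq : ∀ i a, 0 ≤ q i a) :
    ∑ i, w i * entropy (q i) ≤ entropy fun a => ∑ i, w i * q i a := by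
  simp only [entropy, mul_sum]
  rw [sum_comm]
  exact sum_le_sum fun a _ => Real.concaveOn_negMulLog.le_map_sum (fun i _ => hw.1 i) hw.2
    fun i _ => hq i a

lemma entropy_le_neg_sum_mul_log {p q : α → ℝ} (hp : p ∈ stdSimplex ℝ α) (hq : q ∈ stdSimplex ℝ α)
    (hpq : ∀ a, p a ≠ 0 → q a ≠ 0) : entropy p ≤ -∑ a, p a * Real.log (q a) := by
  have hterm (a : α) : Real.negMulLog (p a) ≤ -(p a * Real.log (q a)) + (q a - p a) := by
    rcases (hp.1 a).eq_or_lt with h0 | h0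
    · simp [← h0, hq.1 a]
    have hq₀ : 0 < q a := (hq.1 a).lt_of_ne' (hpq a h0.ne')
    have hle := mul_le_mul_of_nonneg_left
      (Real.log_le_sub_one_of_pos (div_pos hq₀ h0)) h0.le
    rw [Real.log_div hq₀.ne' h0.ne', mul_sub_one, mul_div_cancel₀ _ h0.ne'] at hle
    rw [Real.negMulLog]
    linarith
  calc entropy p ≤ ∑ a, (-(p a * Real.log (q a)) + (q a - p a)) := sum_le_sum fun a _ => hterm a
    _ = -∑ a, p a * Real.log (q a) := by
        rw [sum_add_distrib, sum_neg_distrib, sum_sub_distrib, hp.2, hq.2, sub_self, add_zero]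

lemma entropy_le_log_card {p : α → ℝ} (hp : p ∈ stdSimplex ℝ α) {A : Finset α}
    (hA : ∀ a, p a ≠ 0 → a ∈ A) : entropy p ≤ Real.log #A := by
  classical
  have hsum : ∑ a ∈ A, p a = 1 :=
    hp.2 ▸ sum_subset (subset_univ A) fun a _ ha => not_not.1 (mt (hA a) ha)
  have hA₀ : (#A : ℝ) ≠ 0 := by
    have hne : A.Nonempty := nonempty_of_sum_ne_zero (hsum.trans_ne one_ne_zero)
    exact_mod_cast hne.card_pos.ne'
  calc entropy p ≤ -∑ a, p a * Real.log (if a ∈ A then (#A : ℝ)⁻¹ else 0) := by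
        refine entropy_le_neg_sum_mul_log hp ⟨fun a => by positivity, by simp [hA₀]⟩ fun a ha => ?_
        simp [hA a ha, hA₀]
    _ = -∑ a, p a * Real.log (#A : ℝ)⁻¹ := by
        refine congrArg Neg.neg (sum_congr rfl fun a _ => ?_)
        rcases eq_or_ne (p a) 0 with h0 | h0
        · simp [h0]
        · rw [if_pos (hA a h0)]
    _ = Real.log #A := by simp [← sum_mul, hp.2]

lemma entropyOf_eq_neg_sum (μ : Ω → ℝ) (X : Ω → α) :
    entropyOf μ X = -∑ ω, μ ω * Real.log (law μ X (X ω)) := by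
  rw [← sum_law_mul μ X fun a => Real.log (law μ X a)]
  simp [entropyOf, entropy, Real.negMulLog]

lemma entropyOf_le_of_determines {μ : Ω → ℝ} (hμ : ∀ ω, 0 ≤ μ ω) {X : Ω → α} {Y : Ω → β}
    (h : ∀ ω ω', μ ω ≠ 0 → μ ω' ≠ 0 → X ω' = X ω → Y ω' = Y ω) :
    entropyOf μ Y ≤ entropyOf μ X := by
  rw [entropyOf_eq_neg_sum, entropyOf_eq_neg_sum, neg_le_neg_iff]
  refine sum_le_sum fun ω _ => ?_
  rcases (hμ ω).eq_or_lt with h0 | h0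
  · simp [← h0]
  · exact mul_le_mul_of_nonneg_left (Real.log_le_log (law_pos hμ X h0)
      (law_le_law hμ fun ω' hω' => h ω ω' h0.ne' hω')) h0.le

lemma entropyOf_congr_of_support {μ : Ω → ℝ} (hμ : ∀ ω, 0 ≤ μ ω) {X : Ω → α} {Y : Ω → β}
    (h : ∀ ω ω', μ ω ≠ 0 → μ ω' ≠ 0 → (X ω' = X ω ↔ Y ω' = Y ω)) :
    entropyOf μ X = entropyOf μ Y :=
  le_antisymm (entropyOf_le_of_determines hμ fun ω ω' hω hω' => (h ω ω' hω hω').2)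
    (entropyOf_le_of_determines hμ fun ω ω' hω hω' => (h ω ω' hω hω').1)

lemma entropyOf_congr {μ : Ω → ℝ} (hμ : ∀ ω, 0 ≤ μ ω) {X : Ω → α} {Y : Ω → β}
    (h : ∀ ω ω', X ω' = X ω ↔ Y ω' = Y ω) : entropyOf μ X = entropyOf μ Y :=
  entropyOf_congr_of_support hμ fun ω ω' _ _ => h ω ω'

lemma IndepRV.entropyOf_prod {μ : Ω → ℝ} (hμ : ∀ ω, 0 ≤ μ ω) {X : Ω → α} {Y : Ω → β}
    (h : IndepRV μ X Y) : entropyOf μ ⟪X, Y⟫ = entropyOf μ X + entropyOf μ Y := by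
  simp only [entropyOf_eq_neg_sum]
  rw [← neg_add, ← sum_add_distrib]
  refine congrArg Neg.neg (sum_congr rfl fun ω _ => ?_)
  rcases (hμ ω).eq_or_lt with h0 | h0
  · simp [← h0]
  · rw [h, Real.log_mul (law_pos hμ X h0).ne' (law_pos hμ Y h0).ne', mul_add]

lemma entropyOf_prod_le_add {μ : Ω → ℝ} (hμ : μ ∈ stdSimplex ℝ Ω) (X : Ω → α) (Y : Ω → β) :
    entropyOf μ ⟪X, Y⟫ ≤ entropyOf μ X + entropyOf μ Y := by
  have hX := law_mem_stdSimplex hμ X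
  have hY := law_mem_stdSimplex hμ Y
  calc entropyOf μ ⟪X, Y⟫ ≤ -∑ t, law μ ⟪X, Y⟫ t * Real.log (law μ X t.1 * law μ Y t.2) := by
        refine entropy_le_neg_sum_mul_log (law_mem_stdSimplex hμ _)
          ⟨fun t => mul_nonneg (hX.1 _) (hY.1 _), ?_⟩ fun t ht => ?_
        · rw [Fintype.sum_prod_type, ← sum_mul_sum, hX.2, hY.2, one_mul]
        · obtain ⟨ω, hω, rfl⟩ := exists_of_law_ne_zero ht
          have hω' := (hμ.1 ω).lt_of_ne' hω
          exact (mul_pos (law_pos hμ.1 X hω') (law_pos hμ.1 Y hω')).ne'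
    _ = -∑ ω, μ ω * Real.log (law μ X (X ω) * law μ Y (Y ω)) := by
        rw [sum_law_mul μ ⟪X, Y⟫ fun t => Real.log (law μ X t.1 * law μ Y t.2)]
    _ = entropyOf μ X + entropyOf μ Y := by
        rw [entropyOf_eq_neg_sum, entropyOf_eq_neg_sum, ← neg_add, ← sum_add_distrib]
        refine congrArg Neg.neg (sum_congr rfl fun ω _ => ?_)
        rcases (hμ.1 ω).eq_or_lt with h0 | h0
        · simp [← h0]
        · rw [Real.log_mul (law_pos hμ.1 X h0).ne' (law_pos hμ.1 Y h0).ne', mul_add]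

end Entropy

section Conditioning

variable {Ω α β γ : Type*} [Fintype Ω] {μ : Ω → ℝ}

open scoped Classical in
/-- The weight `μ` conditioned on the event `T = t`; it vanishes if the event is null. -/
noncomputable def condWeight (μ : Ω → ℝ) (T : Ω → γ) (t : γ) (ω : Ω) : ℝ :=
  if T ω = t then μ ω / law μ T t else 0

/-- Independence of `X` and `Y` conditionally on `T`. -/
def CondIndepRV (μ : Ω → ℝ) (X : Ω → α) (Y : Ω → β) (T : Ω → γ) : Prop :=
  ∀ t, IndepRV (condWeight μ T t) X Y

lemma law_condWeight (μ : Ω → ℝ) (T : Ω → γ) (t : γ) (X : Ω → α) (a : α) :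
    law (condWeight μ T t) X a = law μ ⟪X, T⟫ (a, t) / law μ T t := by
  classical
  simp only [law, condWeight, sum_filter, Prod.mk.injEq, sum_div, ite_and, ite_div, zero_div]

lemma condWeight_nonneg (hμ : ∀ ω, 0 ≤ μ ω) (T : Ω → γ) (t : γ) (ω : Ω) :
    0 ≤ condWeight μ T t ω := by
  have := hμ ω
  have := law_nonneg hμ T t
  unfold condWeight
  positivity

lemma condWeight_mem_stdSimplex (hμ : ∀ ω, 0 ≤ μ ω) {T : Ω → γ} {t : γ} (ht : law μ T t ≠ 0) :
    condWeight μ T t ∈ stdSimplex ℝ Ω := by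
  classical
  refine ⟨condWeight_nonneg hμ T t, ?_⟩
  simp only [condWeight, ← sum_filter, ← sum_div]
  exact div_self ht

lemma law_mul_condWeight (hμ : ∀ ω, 0 ≤ μ ω) (T : Ω → γ) (t : γ) (X : Ω → α) (a : α) :
    law μ T t * law (condWeight μ T t) X a = law μ ⟪X, T⟫ (a, t) := by
  rw [law_condWeight]
  rcases eq_or_ne (law μ T t) 0 with h0 | h0
  · have hle : law μ ⟪X, T⟫ (a, t) ≤ law μ T t := law_le_law hμ fun ω _ h => (Prod.ext_iff.1 h).2
    simp [h0, (hle.trans_eq h0).antisymm (law_nonneg hμ _ _)]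
  · exact mul_div_cancel₀ _ h0

variable [Fintype γ]

lemma sum_law_mul_law_condWeight (hμ : ∀ ω, 0 ≤ μ ω) (T : Ω → γ) (X : Ω → α) (a : α) :
    ∑ t, law μ T t * law (condWeight μ T t) X a = law μ X a := by
  simp only [law_mul_condWeight hμ, sum_law_prod_right]

variable [Fintype α] [Fintype β]

/-- The conditional entropy `H(X | T)`. -/
noncomputable def condEntropy (μ : Ω → ℝ) (X : Ω → α) (T : Ω → γ) : ℝ :=
  ∑ t, law μ T t * entropyOf (condWeight μ T t) X

/-- The conditional mutual information `I(X : Y | T)`. -/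
noncomputable def condMutualInfo (μ : Ω → ℝ) (X : Ω → α) (Y : Ω → β) (T : Ω → γ) : ℝ :=
  condEntropy μ X T + condEntropy μ Y T - condEntropy μ ⟪X, Y⟫ T

lemma condEntropy_eq_sub (hμ : ∀ ω, 0 ≤ μ ω) (X : Ω → α) (T : Ω → γ) :
    condEntropy μ X T = entropyOf μ ⟪X, T⟫ - entropyOf μ T := by
  have hterm (t : γ) (a : α) : law μ T t * Real.negMulLog (law (condWeight μ T t) X a) =
      Real.negMulLog (law μ ⟪X, T⟫ (a, t)) + law μ ⟪X, T⟫ (a, t) * Real.log (law μ T t) := by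
    rw [← law_mul_condWeight hμ T t X a, Real.negMulLog_mul, Real.negMulLog, Real.negMulLog]
    ring
  have hsum (t : γ) : ∑ a, law μ ⟪X, T⟫ (a, t) = law μ T t := sum_law_prod_left μ X T t
  have hT : ∑ t, law μ T t * Real.log (law μ T t) = -entropyOf μ T := by
    simp [entropyOf, entropy, Real.negMulLog]
  simp only [condEntropy, entropyOf, entropy, mul_sum, hterm, sum_add_distrib, ← sum_mul, hsum,
    hT, Fintype.sum_prod_type_right, sub_eq_add_neg]

lemma condMutualInfo_eq_sum (μ : Ω → ℝ) (X : Ω → α) (Y : Ω → β) (T : Ω → γ) :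
    condMutualInfo μ X Y T = ∑ t, law μ T t * (entropyOf (condWeight μ T t) X +
      entropyOf (condWeight μ T t) Y - entropyOf (condWeight μ T t) ⟪X, Y⟫) := by
  simp only [condMutualInfo, condEntropy, mul_sub, mul_add, sum_sub_distrib, sum_add_distrib]

lemma condMutualInfo_nonneg (hμ : ∀ ω, 0 ≤ μ ω) (X : Ω → α) (Y : Ω → β) (T : Ω → γ) :
    0 ≤ condMutualInfo μ X Y T := by
  rw [condMutualInfo_eq_sum]
  refine sum_nonneg fun t _ => ?_
  rcases (law_nonneg hμ T t).eq_or_lt with h0 | h0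
  · simp [← h0]
  · exact mul_nonneg h0.le
      (sub_nonneg.2 (entropyOf_prod_le_add (condWeight_mem_stdSimplex hμ h0.ne') X Y))

lemma CondIndepRV.condMutualInfo_eq_zero (hμ : ∀ ω, 0 ≤ μ ω) {X : Ω → α} {Y : Ω → β} {T : Ω → γ}
    (h : CondIndepRV μ X Y T) : condMutualInfo μ X Y T = 0 := by
  rw [condMutualInfo_eq_sum]
  refine sum_eq_zero fun t _ => ?_
  rcases eq_or_ne (law μ T t) 0 with h0 | h0
  · simp [h0]
  · rw [(h t).entropyOf_prod (condWeight_mem_stdSimplex hμ h0).1, sub_self, mul_zero]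

lemma condMutualInfo_eq_entropyOf (hμ : ∀ ω, 0 ≤ μ ω) (X : Ω → α) (Y : Ω → β) (T : Ω → γ) :
    condMutualInfo μ X Y T =
      entropyOf μ ⟪X, T⟫ + entropyOf μ ⟪Y, T⟫ - entropyOf μ ⟪⟪X, Y⟫, T⟫ - entropyOf μ T := by
  simp only [condMutualInfo, condEntropy_eq_sub hμ]
  ring

lemma condEntropy_prod_eq_sub (hμ : ∀ ω, 0 ≤ μ ω) (X : Ω → α) (Y : Ω → β) (T : Ω → γ) :
    condEntropy μ X ⟪Y, T⟫ = condEntropy μ X T - condMutualInfo μ X Y T := by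
  have hassoc : entropyOf μ ⟪X, ⟪Y, T⟫⟫ = entropyOf μ ⟪⟪X, Y⟫, T⟫ :=
    entropyOf_congr hμ fun ω ω' => by simp only [Prod.mk.injEq, and_assoc]
  rw [condMutualInfo_eq_entropyOf hμ, condEntropy_eq_sub hμ, condEntropy_eq_sub hμ, hassoc]
  ring

end Conditioning

section Independence

variable {Ω α β γ δ : Type*} [Fintype Ω]

lemma IndepRV.comp {α' β' : Type*} [Finite α] [Finite β] {μ : Ω → ℝ} {X : Ω → α}
    {Y : Ω → β} (h : IndepRV μ X Y) (φ : α → α') (ψ : β → β') : IndepRV μ (φ ∘ X) (ψ ∘ Y) := by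
  classical
  have := Fintype.ofFinite α
  have := Fintype.ofFinite β
  intro a b
  change law μ ((fun t : α × β => (φ t.1, ψ t.2)) ∘ ⟪X, Y⟫) (a, b) = _
  rw [← law_law, ← law_law μ X φ, ← law_law μ Y ψ, law, law, law, sum_mul_sum, ← sum_product']
  exact sum_congr (by ext; simp) fun t _ => h t.1 t.2

/-- Mutual independence of four random variables. -/
def IndepQuad (μ : Ω → ℝ) (X : Ω → α) (Y : Ω → β) (Z : Ω → γ) (W : Ω → δ) : Prop :=
  ∀ a b c d, law μ ⟪X, ⟪Y, ⟪Z, W⟫⟫⟫ (a, b, c, d) = law μ X a * law μ Y b * law μ Z c * law μ W d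

namespace IndepQuad

variable {μ : Ω → ℝ} {X : Ω → α} {Y : Ω → β} {Z : Ω → γ} {W : Ω → δ}

lemma law_pairs (h : IndepQuad μ X Y Z W) (a : α) (b : β) (c : γ) (d : δ) :
    law μ ⟪⟪X, Y⟫, ⟪Z, W⟫⟫ ((a, b), (c, d)) = law μ X a * law μ Y b * law μ Z c * law μ W d :=
  (law_comp_injective μ ⟪X, ⟪Y, ⟪Z, W⟫⟫⟫ (Equiv.prodAssoc α β (γ × δ)).symm.injective
    (a, b, c, d)).trans (h a b c d)

lemma indep_left [Finite γ] [Finite δ] (hμ : μ ∈ stdSimplex ℝ Ω)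
    (h : IndepQuad μ X Y Z W) : IndepRV μ X Y := by
  have := Fintype.ofFinite γ
  have := Fintype.ofFinite δ
  intro a b
  rw [← sum_law_prod_right μ ⟪X, Y⟫ ⟪Z, W⟫, Fintype.sum_prod_type]
  simp only [h.law_pairs, ← mul_sum, (law_mem_stdSimplex hμ _).2, mul_one]

lemma indep_right [Finite α] [Finite β] (hμ : μ ∈ stdSimplex ℝ Ω)
    (h : IndepQuad μ X Y Z W) : IndepRV μ Z W := by
  have := Fintype.ofFinite α
  have := Fintype.ofFinite β
  intro c d
  rw [← sum_law_prod_left μ ⟪X, Y⟫ ⟪Z, W⟫, Fintype.sum_prod_type]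
  simp only [h.law_pairs, ← sum_mul, ← mul_sum, (law_mem_stdSimplex hμ _).2, mul_one, one_mul]

lemma indep_pairs [Finite α] [Finite β] [Finite γ] [Finite δ] (hμ : μ ∈ stdSimplex ℝ Ω)
    (h : IndepQuad μ X Y Z W) : IndepRV μ ⟪X, Y⟫ ⟪Z, W⟫ := by
  rintro ⟨a, b⟩ ⟨c, d⟩
  rw [h.law_pairs, h.indep_left hμ, h.indep_right hμ]
  ring

lemma swap_left (h : IndepQuad μ X Y Z W) : IndepQuad μ Y X Z W := fun b a c d =>
  (law_comp_injective μ ⟪X, ⟪Y, ⟪Z, W⟫⟫⟫ (e := fun t => (t.2.1, t.1, t.2.2))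
    (by rintro ⟨⟩ ⟨⟩; grind) (a, b, c, d)).trans (by rw [h]; ring)

lemma swap_middle (h : IndepQuad μ X Y Z W) : IndepQuad μ X Z Y W := fun a c b d =>
  (law_comp_injective μ ⟪X, ⟪Y, ⟪Z, W⟫⟫⟫ (e := fun t => (t.1, t.2.2.1, t.2.1, t.2.2.2))
    (by rintro ⟨⟩ ⟨⟩; grind) (a, b, c, d)).trans (by rw [h]; ring)

lemma swap_right (h : IndepQuad μ X Y Z W) : IndepQuad μ X Y W Z := fun a b d c =>
  (law_comp_injective μ ⟪X, ⟪Y, ⟪Z, W⟫⟫⟫ (e := fun t => (t.1, t.2.1, t.2.2.2, t.2.2.1))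
    (by rintro ⟨⟩ ⟨⟩; grind) (a, b, c, d)).trans (by rw [h]; ring)

end IndepQuad

/-- The product weight `p ⊗ q`. -/
def prodWeight (p : α → ℝ) (q : β → ℝ) (t : α × β) : ℝ := p t.1 * q t.2

variable [Fintype α] [Fintype β] [Fintype γ] [Fintype δ]
variable {p : α → ℝ} {q : β → ℝ} {r : γ → ℝ} {s : δ → ℝ}

lemma prodWeight_mem_stdSimplex (hp : p ∈ stdSimplex ℝ α) (hq : q ∈ stdSimplex ℝ β) :
    prodWeight p q ∈ stdSimplex ℝ (α × β) :=
  ⟨fun t => mul_nonneg (hp.1 t.1) (hq.1 t.2), by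
    simp only [prodWeight, Fintype.sum_prod_type, ← mul_sum, hq.2, mul_one, hp.2]⟩

lemma law_prodWeight_fst (p : α → ℝ) (hq : q ∈ stdSimplex ℝ β) :
    law (prodWeight p q) Prod.fst = p := by
  funext a
  rw [← sum_law_prod_right _ Prod.fst Prod.snd]
  change ∑ b, law (prodWeight p q) id (a, b) = p a
  simp only [law_id, prodWeight, ← mul_sum, hq.2, mul_one]

lemma law_prodWeight_snd (hp : p ∈ stdSimplex ℝ α) (q : β → ℝ) :
    law (prodWeight p q) Prod.snd = q := by
  funext b
  rw [← sum_law_prod_left _ Prod.fst Prod.snd]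
  change ∑ a, law (prodWeight p q) id (a, b) = q b
  simp only [law_id, prodWeight, ← sum_mul, hp.2, one_mul]

lemma indepRV_fst_snd (hp : p ∈ stdSimplex ℝ α) (hq : q ∈ stdSimplex ℝ β) :
    IndepRV (prodWeight p q) Prod.fst Prod.snd := by
  intro a b
  rw [law_prodWeight_fst p hq, law_prodWeight_snd hp q]
  exact congrFun (law_id (prodWeight p q)) (a, b)

lemma exists_indepQuad (hp : p ∈ stdSimplex ℝ α) (hq : q ∈ stdSimplex ℝ β)
    (hr : r ∈ stdSimplex ℝ γ) (hs : s ∈ stdSimplex ℝ δ) :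
    ∃ μ ∈ stdSimplex ℝ (α × β × γ × δ), ∃ (X : _ → α) (Y : _ → β) (Z : _ → γ) (W : _ → δ),
      IndepQuad μ X Y Z W ∧ law μ X = p ∧ law μ Y = q ∧ law μ Z = r ∧ law μ W = s := by
  have hrs := prodWeight_mem_stdSimplex hr hs
  have hqrs := prodWeight_mem_stdSimplex hq hrs
  set μ := prodWeight p (prodWeight q (prodWeight r s))
  have hX : law μ Prod.fst = p := law_prodWeight_fst p hqrs
  have hYZW : law μ Prod.snd = prodWeight q (prodWeight r s) := law_prodWeight_snd hp _
  have hY : law μ (Prod.fst ∘ Prod.snd) = q := by rw [← law_law, hYZW, law_prodWeight_fst q hrs]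
  have hZW : law μ (Prod.snd ∘ Prod.snd) = prodWeight r s := by
    rw [← law_law, hYZW, law_prodWeight_snd hq]
  have hZ : law μ (Prod.fst ∘ Prod.snd ∘ Prod.snd) = r := by
    rw [← law_law, hZW, law_prodWeight_fst r hs]
  have hW : law μ (Prod.snd ∘ Prod.snd ∘ Prod.snd) = s := by
    rw [← law_law, hZW, law_prodWeight_snd hr]
  refine ⟨μ, prodWeight_mem_stdSimplex hp hqrs, _, _, _, _, fun a b c d => ?_, hX, hY, hZ, hW⟩
  rw [hX, hY, hZ, hW]
  calc law μ id (a, b, c, d) = p a * (q b * (r c * s d)) := by rw [law_id]; rfl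
    _ = p a * q b * r c * s d := by ring

end Independence

/-- The convolution of two weights on a finite abelian group: the law of the sum of two
independent variables. -/
def addConv {G : Type*} [AddCommGroup G] [Fintype G] (p q : G → ℝ) (g : G) : ℝ :=
  ∑ h, p h * q (g - h)

local infixl:70 " ∗ " => addConv

section Convolution

variable {Ω G : Type*} [Fintype Ω] [AddCommGroup G] [Fintype G]
variable {p q r p₀ : G → ℝ}

lemma addConv_comm (p q : G → ℝ) : p ∗ q = q ∗ p := by
  funext g
  exact Fintype.sum_equiv (Equiv.subLeft g) _ _ fun h => by simp [mul_comm]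

lemma addConv_assoc (p q r : G → ℝ) : p ∗ q ∗ r = p ∗ (q ∗ r) := by
  funext g
  simp only [addConv, sum_mul, mul_sum]
  rw [sum_comm]
  refine sum_congr rfl fun k _ => Fintype.sum_equiv (Equiv.subRight k) _ _ fun h => ?_
  simp only [Equiv.subRight_apply, sub_sub_sub_cancel_right, mul_assoc]

lemma addConv_mem_stdSimplex (hp : p ∈ stdSimplex ℝ G) (hq : q ∈ stdSimplex ℝ G) :
    p ∗ q ∈ stdSimplex ℝ G := by
  refine ⟨fun g => sum_nonneg fun h _ => mul_nonneg (hp.1 h) (hq.1 _), ?_⟩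
  simp only [addConv]
  rw [sum_comm, ← hp.2]
  refine sum_congr rfl fun h _ => ?_
  rw [← mul_sum, show ∑ g, q (g - h) = 1 from ((Equiv.subRight h).sum_comp q).trans hq.2, mul_one]

lemma IndepRV.law_add {μ : Ω → ℝ} {X Y : Ω → G} (h : IndepRV μ X Y) :
    law μ (X + Y) = law μ X ∗ law μ Y := by
  classical
  funext g
  change law μ ((fun t : G × G => t.1 + t.2) ∘ ⟪X, Y⟫) g = _
  rw [← law_law, law, sum_filter, Fintype.sum_prod_type]
  refine sum_congr rfl fun a _ => ?_
  simp only [← eq_sub_iff_add_eq', sum_ite_eq', mem_univ, if_true]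
  exact h a (g - a)

lemma entropy_le_entropy_addConv_right (hp : p ∈ stdSimplex ℝ G) (hq : q ∈ stdSimplex ℝ G) :
    entropy q ≤ entropy (p ∗ q) := by
  have htranslate (h : G) : entropy (fun g => q (g - h)) = entropy q :=
    (Equiv.subRight h).sum_comp fun g => Real.negMulLog (q g)
  calc entropy q = ∑ h, p h * entropy fun g => q (g - h) := by
        simp only [htranslate, ← sum_mul, hp.2, one_mul]
    _ ≤ entropy (p ∗ q) := sum_mul_entropy_le_entropy_sum hp fun _ _ => hq.1 _

lemma entropy_le_entropy_addConv_left (hp : p ∈ stdSimplex ℝ G) (hq : q ∈ stdSimplex ℝ G) :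
    entropy p ≤ entropy (p ∗ q) :=
  addConv_comm p q ▸ entropy_le_entropy_addConv_right hq hp

lemma IndepRV.entropyOf_add {μ : Ω → ℝ} {X Y : Ω → G} (h : IndepRV μ X Y) :
    entropyOf μ (X + Y) = entropy (law μ X ∗ law μ Y) :=
  congrArg entropy h.law_add

lemma IndepQuad.entropyOf_add_prod_add {μ : Ω → ℝ} (hμ : μ ∈ stdSimplex ℝ Ω) {X Y Z W : Ω → G}
    (h : IndepQuad μ X Y Z W) : entropyOf μ ⟪X + Y, Z + W⟫ =
      entropy (law μ X ∗ law μ Y) + entropy (law μ Z ∗ law μ W) := by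
  rw [← (h.indep_left hμ).entropyOf_add, ← (h.indep_right hμ).entropyOf_add]
  exact ((h.indep_pairs hμ).comp (fun t => t.1 + t.2) fun t => t.1 + t.2).entropyOf_prod hμ.1

/-- The Kaimanovich–Vershik inequality: for independent `X`, `Y`, `Z` it says
`0 ≤ I(X : Z | X + Y + Z)`. -/
lemma entropy_addConv_addConv_add_le (hp : p ∈ stdSimplex ℝ G) (hq : q ∈ stdSimplex ℝ G)
    (hr : r ∈ stdSimplex ℝ G) :
    entropy (p ∗ q ∗ r) + entropy q ≤ entropy (p ∗ q) + entropy (q ∗ r) := by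
  obtain ⟨μ, hμ, X, Y, Z, W, hquad, rfl, rfl, rfl, -⟩ := exists_indepQuad hp hq hr hp
  have hXY : IndepRV μ X Y := hquad.indep_left hμ
  have hYZ : IndepRV μ Y Z := hquad.swap_left.swap_middle.indep_left hμ
  have hXY_Z : IndepRV μ ⟪X, Y⟫ Z := (hquad.indep_pairs hμ).comp id Prod.fst
  have hsum_Z : IndepRV μ (X + Y) Z := hXY_Z.comp (fun t => t.1 + t.2) id
  have hX_sum : IndepRV μ X (Y + Z) :=
    (hquad.swap_right.swap_middle.indep_pairs hμ).comp Prod.fst fun t => t.1 + t.2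
  have hS : entropyOf μ (X + Y + Z) = entropy (law μ X ∗ law μ Y ∗ law μ Z) := by
    rw [hsum_Z.entropyOf_add, hXY.law_add]
  have hXS : entropyOf μ ⟪X, X + Y + Z⟫ = entropyOf μ X + entropy (law μ Y ∗ law μ Z) := by
    rw [← hYZ.entropyOf_add, ← hX_sum.entropyOf_prod hμ.1]
    exact entropyOf_congr hμ.1 fun ω ω' => by simp only [Prod.mk.injEq, Pi.add_apply]; grind
  have hZS : entropyOf μ ⟪Z, X + Y + Z⟫ = entropy (law μ X ∗ law μ Y) + entropyOf μ Z := by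
    rw [← hXY.entropyOf_add, ← hsum_Z.entropyOf_prod hμ.1]
    exact entropyOf_congr hμ.1 fun ω ω' => by simp only [Prod.mk.injEq, Pi.add_apply]; grind
  have hXZS : entropyOf μ ⟪⟪X, Z⟫, X + Y + Z⟫ = entropyOf μ X + entropyOf μ Y + entropyOf μ Z := by
    rw [← hXY.entropyOf_prod hμ.1, ← hXY_Z.entropyOf_prod hμ.1]
    exact entropyOf_congr hμ.1 fun ω ω' => by simp only [Prod.mk.injEq, Pi.add_apply]; grind
  have hI := condMutualInfo_nonneg hμ.1 X Z (X + Y + Z)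
  rw [condMutualInfo_eq_entropyOf hμ.1, hXS, hZS, hXZS, hS] at hI
  simp only [entropyOf] at hI
  linarith

lemma entropy_addConv_triangle (hp : p ∈ stdSimplex ℝ G) (hq : q ∈ stdSimplex ℝ G)
    (hr : r ∈ stdSimplex ℝ G) :
    entropy (p ∗ r) + entropy q ≤ entropy (p ∗ q) + entropy (q ∗ r) := by
  have hle : entropy (p ∗ r) ≤ entropy (p ∗ q ∗ r) := by
    rw [addConv_comm p q, addConv_assoc]
    exact entropy_le_entropy_addConv_right hq (addConv_mem_stdSimplex hp hr)
  linarith [entropy_addConv_addConv_add_le hp hq hr]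

/-- The entropic Ruzsa distance, with sums in place of differences: the two agree in the
elementary abelian 2-groups to which it is applied. -/
noncomputable def ruzsaDist (p q : G → ℝ) : ℝ := entropy (p ∗ q) - entropy p / 2 - entropy q / 2

/-- The functional minimised over `(p, q)` in the proof of the polynomial Freiman–Ruzsa theorem. The
small parameter `η` keeps a minimiser close to the given weight `p₀`. -/
noncomputable def pfrFunctional (η : ℝ) (p₀ p q : G → ℝ) : ℝ :=
  ruzsaDist p q + η * ruzsaDist p₀ p + η * ruzsaDist p₀ q

lemma ruzsaDist_comm (p q : G → ℝ) : ruzsaDist p q = ruzsaDist q p := by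
  rw [ruzsaDist, ruzsaDist, addConv_comm]
  ring

lemma ruzsaDist_nonneg (hp : p ∈ stdSimplex ℝ G) (hq : q ∈ stdSimplex ℝ G) :
    0 ≤ ruzsaDist p q := by
  rw [ruzsaDist]
  linarith [entropy_le_entropy_addConv_left hp hq, entropy_le_entropy_addConv_right hp hq]

lemma ruzsaDist_self_le (hp : p ∈ stdSimplex ℝ G) (hq : q ∈ stdSimplex ℝ G) :
    ruzsaDist p p ≤ 2 * ruzsaDist p q := by
  have htriangle := entropy_addConv_triangle hp hq hp
  rw [addConv_comm q p] at htriangle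
  simp only [ruzsaDist]
  linarith

end Convolution

section ConditionalCopies

variable {Ω α β γ : Type*} [Fintype Ω] {μ : Ω → ℝ}

/-- The law on `Ω × Ω` of two copies of a random outcome with law `μ` which share the value
of `T` and are independent conditionally on it. -/
noncomputable def condIndepCopies (μ : Ω → ℝ) (T : Ω → γ) (w : Ω × Ω) : ℝ :=
  μ w.1 * condWeight μ T (T w.1) w.2

lemma eq_of_condIndepCopies_ne_zero {T : Ω → γ} {w : Ω × Ω} (hw : condIndepCopies μ T w ≠ 0) :
    T w.1 = T w.2 := by
  by_contra hne
  exact hw (by rw [condIndepCopies, condWeight, if_neg (Ne.symm hne), mul_zero])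

lemma law_condIndepCopies_fst (hμ : ∀ ω, 0 ≤ μ ω) (T : Ω → γ) :
    law (condIndepCopies μ T) Prod.fst = μ := by
  classical
  funext ω
  rw [law, sum_filter, Fintype.sum_prod_type, Fintype.sum_eq_single ω fun ω' hne => by simp [hne]]
  simp only [if_true, condIndepCopies, ← mul_sum]
  rcases (hμ ω).eq_or_lt with h0 | h0
  · simp [← h0]
  · rw [(condWeight_mem_stdSimplex hμ (law_pos hμ T h0).ne').2, mul_one]

lemma law_condIndepCopies_snd [Finite γ] (hμ : ∀ ω, 0 ≤ μ ω) (T : Ω → γ) :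
    law (condIndepCopies μ T) Prod.snd = μ := by
  classical
  have := Fintype.ofFinite γ
  funext ω
  rw [law, sum_filter, Fintype.sum_prod_type]
  simp only [sum_ite_eq', mem_univ, if_true, condIndepCopies]
  rw [← sum_law_mul μ T fun t => condWeight μ T t ω]
  simpa only [law_id] using sum_law_mul_law_condWeight hμ T id ω

lemma condIndepCopies_mem_stdSimplex (hμ : μ ∈ stdSimplex ℝ Ω) (T : Ω → γ) :
    condIndepCopies μ T ∈ stdSimplex ℝ (Ω × Ω) :=
  ⟨fun w => mul_nonneg (hμ.1 _) (condWeight_nonneg hμ.1 T _ _), by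
    rw [← sum_law _ Prod.fst, law_condIndepCopies_fst hμ.1, hμ.2]⟩

lemma condWeight_condIndepCopies (hμ : ∀ ω, 0 ≤ μ ω) (T : Ω → γ) (t : γ) :
    condWeight (condIndepCopies μ T) (T ∘ Prod.fst) t =
      prodWeight (condWeight μ T t) (condWeight μ T t) := by
  funext w
  rw [prodWeight, condWeight, ← law_law, law_condIndepCopies_fst hμ, condIndepCopies]
  by_cases ht : T w.1 = t
  · subst ht
    simp only [Function.comp_apply, condWeight, if_true]
    ring
  · simp [condWeight, ht]

lemma condIndepRV_condIndepCopies (hμ : ∀ ω, 0 ≤ μ ω) (T : Ω → γ) (X : Ω → α) (Y : Ω → β) :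
    CondIndepRV (condIndepCopies μ T) (X ∘ Prod.fst) (Y ∘ Prod.snd) (T ∘ Prod.fst) := by
  intro t
  rw [condWeight_condIndepCopies hμ]
  by_cases ht : law μ T t = 0
  · have hzero (w : Ω × Ω) : prodWeight (condWeight μ T t) (condWeight μ T t) w = 0 := by
      simp [prodWeight, condWeight, ht]
    intro a b
    simp [law, hzero]
  · have ht' := condWeight_mem_stdSimplex hμ ht
    exact (indepRV_fst_snd ht' ht').comp X Y

variable [Fintype α]

lemma entropyOf_condIndepCopies_fst (hμ : ∀ ω, 0 ≤ μ ω) (T : Ω → γ) (X : Ω → α) :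
    entropyOf (condIndepCopies μ T) (X ∘ Prod.fst) = entropyOf μ X := by
  rw [entropyOf, ← law_law, law_condIndepCopies_fst hμ, entropyOf]

lemma entropyOf_condIndepCopies_snd [Finite γ] (hμ : ∀ ω, 0 ≤ μ ω) (T : Ω → γ) (X : Ω → α) :
    entropyOf (condIndepCopies μ T) (X ∘ Prod.snd) = entropyOf μ X := by
  rw [entropyOf, ← law_law, law_condIndepCopies_snd hμ, entropyOf]

lemma condEntropy_condIndepCopies_fst [Fintype γ] (hμ : μ ∈ stdSimplex ℝ Ω) (T : Ω → γ)
    (X : Ω → α) :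
    condEntropy (condIndepCopies μ T) (X ∘ Prod.fst) (T ∘ Prod.fst) = condEntropy μ X T := by
  rw [condEntropy_eq_sub (condIndepCopies_mem_stdSimplex hμ T).1, condEntropy_eq_sub hμ.1,
    entropyOf_condIndepCopies_fst hμ.1, ← entropyOf_condIndepCopies_fst hμ.1 T ⟪X, T⟫]
  rfl

lemma condEntropy_condIndepCopies_snd [Fintype γ] (hμ : μ ∈ stdSimplex ℝ Ω) (T : Ω → γ)
    (X : Ω → α) :
    condEntropy (condIndepCopies μ T) (X ∘ Prod.snd) (T ∘ Prod.fst) = condEntropy μ X T := by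
  have hν := condIndepCopies_mem_stdSimplex hμ T
  rw [condEntropy_eq_sub hν.1, condEntropy_eq_sub hμ.1, entropyOf_condIndepCopies_fst hμ.1,
    ← entropyOf_condIndepCopies_snd hμ.1 T ⟪X, T⟫]
  refine congrArg (· - _) (congrArg entropy (law_congr fun w hw => ?_))
  simp [eq_of_condIndepCopies_ne_zero hw]

end ConditionalCopies

section EntropicBalogSzemerediGowers

variable {Ω γ G : Type*} [Fintype Ω] [AddCommGroup G] {μ : Ω → ℝ}

lemma add_eq_and_eq_of_condIndepCopies_ne_zero {A B : Ω → G} {S : Ω → γ} {w : Ω × Ω}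
    (hw : condIndepCopies μ ⟪A + B, S⟫ w ≠ 0) : A w.1 + B w.1 = A w.2 + B w.2 ∧ S w.1 = S w.2 := by
  simpa using eq_of_condIndepCopies_ne_zero hw

variable [Fintype γ] [Fintype G]

lemma entropyOf_condIndepCopies_prod (hμ : μ ∈ stdSimplex ℝ Ω) (A B : Ω → G) (S : Ω → γ) :
    entropyOf (condIndepCopies μ ⟪A + B, S⟫) ⟪⟪A ∘ Prod.fst, B ∘ Prod.fst⟫,
        ⟪(A ∘ Prod.fst + B ∘ Prod.snd : Ω × Ω → G), S ∘ Prod.fst⟫⟫ + entropyOf μ ⟪A + B, S⟫ =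
      2 * entropyOf μ ⟪⟪A, B⟫, S⟫ := by
  set T : Ω → G × γ := ⟪A + B, S⟫ with hT
  have hν := (condIndepCopies_mem_stdSimplex hμ T).1
  have hcopies := (condIndepRV_condIndepCopies hμ.1 T ⟪A, B⟫ ⟪A, B⟫).condMutualInfo_eq_zero hν
  have hABT : entropyOf μ ⟪⟪A, B⟫, T⟫ = entropyOf μ ⟪⟪A, B⟫, S⟫ :=
    entropyOf_congr hμ.1 fun ω ω' => by simp only [hT, Prod.mk.injEq, Pi.add_apply]; grind
  have hall : entropyOf (condIndepCopies μ T)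
        ⟪⟪⟪A, B⟫ ∘ Prod.fst, ⟪A, B⟫ ∘ Prod.snd⟫, T ∘ Prod.fst⟫ =
      entropyOf (condIndepCopies μ T) ⟪⟪A ∘ Prod.fst, B ∘ Prod.fst⟫,
        ⟪(A ∘ Prod.fst + B ∘ Prod.snd : Ω × Ω → G), S ∘ Prod.fst⟫⟫ :=
    entropyOf_congr_of_support hν fun w w' hw hw' => by
      have := add_eq_and_eq_of_condIndepCopies_ne_zero hw
      have := add_eq_and_eq_of_condIndepCopies_ne_zero hw'
      simp only [hT, Prod.mk.injEq, Pi.add_apply, Function.comp_apply]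
      grind
  rw [condMutualInfo, condEntropy_condIndepCopies_fst hμ, condEntropy_condIndepCopies_snd hμ,
    condEntropy_eq_sub hν, condEntropy_eq_sub hμ.1, hall, hABT,
    entropyOf_condIndepCopies_fst hμ.1] at hcopies
  linarith

variable [Module (ZMod 2) G]

lemma entropyOf_cross_add_le {ν : Ω → ℝ} (hν : ∀ ω, 0 ≤ ν ω) {A₁ B₁ A₂ B₂ : Ω → G} (S : Ω → γ)
    (hcross : ∀ ω, ν ω ≠ 0 → A₁ ω + B₁ ω = A₂ ω + B₂ ω) :
    entropyOf ν ⟪⟪A₁, B₁⟫, ⟪A₁ + B₂, S⟫⟫ + entropyOf ν ⟪A₁ + B₂, S⟫ + 2 * entropyOf ν S ≤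
      entropyOf ν ⟪A₁, S⟫ + entropyOf ν ⟪B₂, S⟫ + entropyOf ν ⟪B₁, S⟫ + entropyOf ν ⟪A₂, S⟫ := by
  have hflip (ω : Ω) (hω : ν ω ≠ 0) : A₁ ω + B₂ ω = B₁ ω + A₂ ω := by
    rw [← sub_eq_zero, ZModModule.sub_eq_add, ← sub_eq_zero.2 (hcross ω hω),
      ZModModule.sub_eq_add]
    abel
  have hA : entropyOf ν ⟪A₁, ⟪A₁ + B₂, S⟫⟫ = entropyOf ν ⟪⟪A₁, B₂⟫, S⟫ :=
    entropyOf_congr hν fun ω ω' => by simp only [Prod.mk.injEq, Pi.add_apply]; grind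
  have hB : entropyOf ν ⟪B₁, ⟪A₁ + B₂, S⟫⟫ = entropyOf ν ⟪⟪B₁, A₂⟫, S⟫ :=
    entropyOf_congr_of_support hν fun ω ω' hω hω' => by
      simp only [Prod.mk.injEq, Pi.add_apply, hflip ω hω, hflip ω' hω']; grind
  have hI := condMutualInfo_nonneg hν A₁ B₁ ⟪A₁ + B₂, S⟫
  have hIA := condMutualInfo_nonneg hν A₁ B₂ S
  have hIB := condMutualInfo_nonneg hν B₁ A₂ S
  rw [condMutualInfo_eq_entropyOf hν] at hI hIA hIB
  linarith

/-- The entropic Balog–Szemerédi–Gowers lemma. -/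
lemma condEntropy_condIndepCopies_add_le (hμ : μ ∈ stdSimplex ℝ Ω) (A B : Ω → G) (S : Ω → γ) :
    condEntropy (condIndepCopies μ ⟪A + B, S⟫) (A ∘ Prod.fst + B ∘ Prod.snd)
        (⟪A + B, S⟫ ∘ Prod.fst) -
        condEntropy μ A ⟪A + B, S⟫ / 2 - condEntropy μ B ⟪A + B, S⟫ / 2 ≤
      condMutualInfo μ A B S + condMutualInfo μ A (A + B) S + condMutualInfo μ B (A + B) S := by
  have hjoint := entropyOf_condIndepCopies_prod hμ A B S
  have hA : entropyOf μ ⟪⟪A, A + B⟫, S⟫ = entropyOf μ ⟪⟪A, B⟫, S⟫ :=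
    entropyOf_congr hμ.1 fun ω ω' => by simp only [Prod.mk.injEq, Pi.add_apply]; grind
  have hB : entropyOf μ ⟪⟪B, A + B⟫, S⟫ = entropyOf μ ⟪⟪A, B⟫, S⟫ :=
    entropyOf_congr hμ.1 fun ω ω' => by simp only [Prod.mk.injEq, Pi.add_apply]; grind
  have hAT : entropyOf μ ⟪A, ⟪A + B, S⟫⟫ = entropyOf μ ⟪⟪A, B⟫, S⟫ :=
    entropyOf_congr hμ.1 fun ω ω' => by simp only [Prod.mk.injEq, Pi.add_apply]; grind
  have hBT : entropyOf μ ⟪B, ⟪A + B, S⟫⟫ = entropyOf μ ⟪⟪A, B⟫, S⟫ :=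
    entropyOf_congr hμ.1 fun ω ω' => by simp only [Prod.mk.injEq, Pi.add_apply]; grind
  set T : Ω → G × γ := ⟪A + B, S⟫
  set ν := condIndepCopies μ T
  have hν : ∀ w, 0 ≤ ν w := (condIndepCopies_mem_stdSimplex hμ T).1
  have hfst (X : Ω → G) : entropyOf ν ⟪X ∘ Prod.fst, S ∘ Prod.fst⟫ = entropyOf μ ⟪X, S⟫ :=
    entropyOf_condIndepCopies_fst hμ.1 T ⟪X, S⟫
  have hsnd (X : Ω → G) : entropyOf ν ⟪X ∘ Prod.snd, S ∘ Prod.fst⟫ = entropyOf μ ⟪X, S⟫ := by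
    rw [← entropyOf_condIndepCopies_snd hμ.1 T ⟪X, S⟫]
    exact congrArg entropy (law_congr fun w hw => by
      simp [(add_eq_and_eq_of_condIndepCopies_ne_zero hw).2])
  have hT : entropyOf ν (T ∘ Prod.fst) = entropyOf μ T := entropyOf_condIndepCopies_fst hμ.1 T T
  have hS : entropyOf ν (S ∘ Prod.fst) = entropyOf μ S := entropyOf_condIndepCopies_fst hμ.1 T S
  have hcross := entropyOf_cross_add_le hν (A₁ := A ∘ Prod.fst) (B₁ := B ∘ Prod.fst)
    (A₂ := A ∘ Prod.snd) (B₂ := B ∘ Prod.snd) (S ∘ Prod.fst)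
    fun w hw => (add_eq_and_eq_of_condIndepCopies_ne_zero hw).1
  set Q : Ω × Ω → G := A ∘ Prod.fst + B ∘ Prod.snd
  have hQ : entropyOf ν ⟪⟪Q, (A + B) ∘ Prod.fst⟫, S ∘ Prod.fst⟫ = entropyOf ν ⟪Q, T ∘ Prod.fst⟫ :=
    entropyOf_congr hν fun w w' => by simp only [T, Prod.mk.injEq, Function.comp_apply]; tauto
  have hdrop := condMutualInfo_nonneg hν Q ((A + B) ∘ Prod.fst) (S ∘ Prod.fst)
  rw [condMutualInfo_eq_entropyOf hν, hfst, hQ, hS] at hdrop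
  rw [hfst, hfst, hsnd, hsnd, hS] at hcross
  rw [condEntropy_eq_sub hν, condEntropy_eq_sub hμ.1, condEntropy_eq_sub hμ.1, hT, hAT, hBT,
    condMutualInfo_eq_entropyOf hμ.1, condMutualInfo_eq_entropyOf hμ.1,
    condMutualInfo_eq_entropyOf hμ.1, hA, hB]
  linarith only [hcross, hdrop, hjoint, show entropyOf μ T = entropyOf μ ⟪A + B, S⟫ from rfl]

end EntropicBalogSzemerediGowers

section PFRMinimizer

variable {Ω γ G : Type*} [Fintype Ω] [Fintype γ] [AddCommGroup G] [Fintype G]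
variable {μ : Ω → ℝ} {η : ℝ} {p₀ p₁ p₂ : G → ℝ}

/-- `(p₁, p₂)` minimises the functional `pfrFunctional η p₀` over pairs of probability weights. -/
structure IsPFRMinimizer (η : ℝ) (p₀ p₁ p₂ : G → ℝ) : Prop where
  left_mem : p₁ ∈ stdSimplex ℝ G
  right_mem : p₂ ∈ stdSimplex ℝ G
  le : ∀ {q₁ q₂}, q₁ ∈ stdSimplex ℝ G → q₂ ∈ stdSimplex ℝ G →
    pfrFunctional η p₀ p₁ p₂ ≤ pfrFunctional η p₀ q₁ q₂

lemma CondIndepRV.sum_law_mul_ruzsaDist {X Y : Ω → G} {T : Ω → γ} (h : CondIndepRV μ X Y T) :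
    ∑ t, law μ T t * ruzsaDist (law (condWeight μ T t) X) (law (condWeight μ T t) Y) =
      condEntropy μ (X + Y) T - condEntropy μ X T / 2 - condEntropy μ Y T / 2 := by
  simp only [condEntropy, ruzsaDist, ← (h _).entropyOf_add, sum_div, ← sum_sub_distrib]
  exact sum_congr rfl fun t _ => by simp only [entropyOf]; ring

lemma sum_law_mul_ruzsaDist_le (hμ : μ ∈ stdSimplex ℝ Ω) (hp₀ : p₀ ∈ stdSimplex ℝ G) (X : Ω → G)
    (T : Ω → γ) :
    ∑ t, law μ T t * ruzsaDist p₀ (law (condWeight μ T t) X) ≤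
      entropy (p₀ ∗ law μ X) - entropy p₀ / 2 - condEntropy μ X T / 2 := by
  have hconv : p₀ ∗ law μ X = fun g => ∑ t, law μ T t * (p₀ ∗ law (condWeight μ T t) X) g := by
    funext g
    simp only [addConv, ← sum_law_mul_law_condWeight hμ.1 T X, mul_sum]
    rw [sum_comm]
    exact sum_congr rfl fun t _ => sum_congr rfl fun g _ => by ring
  have hconcave : ∑ t, law μ T t * entropy (p₀ ∗ law (condWeight μ T t) X) ≤
      entropy (p₀ ∗ law μ X) := by
    rw [hconv]
    exact sum_mul_entropy_le_entropy_sum (law_mem_stdSimplex hμ T) fun t g =>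
      sum_nonneg fun h _ => mul_nonneg (hp₀.1 h) (law_nonneg (condWeight_nonneg hμ.1 T t) X _)
  have hsplit : ∑ t, law μ T t * ruzsaDist p₀ (law (condWeight μ T t) X) =
      ∑ t, law μ T t * entropy (p₀ ∗ law (condWeight μ T t) X) -
        (∑ t, law μ T t) * (entropy p₀ / 2) - condEntropy μ X T / 2 := by
    simp only [condEntropy, sum_mul, sum_div, ← sum_sub_distrib]
    exact sum_congr rfl fun t _ => by simp only [ruzsaDist, entropyOf]; ring
  rw [hsplit, (law_mem_stdSimplex hμ T).2]
  linarith

namespace IsPFRMinimizer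

lemma le_of_condIndep (hmin : IsPFRMinimizer η p₀ p₁ p₂) (hη : 0 ≤ η)
    (hp₀ : p₀ ∈ stdSimplex ℝ G) (hμ : μ ∈ stdSimplex ℝ Ω) {X Y : Ω → G} {T : Ω → γ}
    (h : CondIndepRV μ X Y T) :
    pfrFunctional η p₀ p₁ p₂ ≤
      (condEntropy μ (X + Y) T - condEntropy μ X T / 2 - condEntropy μ Y T / 2) +
        η * (entropy (p₀ ∗ law μ X) - entropy p₀ / 2 - condEntropy μ X T / 2) +
        η * (entropy (p₀ ∗ law μ Y) - entropy p₀ / 2 - condEntropy μ Y T / 2) := by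
  have hT := law_mem_stdSimplex hμ T
  have hle (t : γ) : law μ T t * pfrFunctional η p₀ p₁ p₂ ≤ law μ T t *
      pfrFunctional η p₀ (law (condWeight μ T t) X) (law (condWeight μ T t) Y) := by
    rcases (hT.1 t).eq_or_lt with h0 | h0
    · simp [← h0]
    · have ht := condWeight_mem_stdSimplex hμ.1 h0.ne'
      exact mul_le_mul_of_nonneg_left
        (hmin.le (law_mem_stdSimplex ht X) (law_mem_stdSimplex ht Y)) h0.le
  calc pfrFunctional η p₀ p₁ p₂ = ∑ t, law μ T t * pfrFunctional η p₀ p₁ p₂ := by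
        rw [← sum_mul, hT.2, one_mul]
    _ ≤ ∑ t, law μ T t *
          pfrFunctional η p₀ (law (condWeight μ T t) X) (law (condWeight μ T t) Y) :=
        sum_le_sum fun t _ => hle t
    _ = ∑ t, law μ T t * ruzsaDist (law (condWeight μ T t) X) (law (condWeight μ T t) Y) +
          η * ∑ t, law μ T t * ruzsaDist p₀ (law (condWeight μ T t) X) +
          η * ∑ t, law μ T t * ruzsaDist p₀ (law (condWeight μ T t) Y) := by
        simp only [pfrFunctional, mul_sum, ← sum_add_distrib]
        exact sum_congr rfl fun t _ => by ring
    _ ≤ _ := by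
        rw [h.sum_law_mul_ruzsaDist]
        gcongr
        · exact sum_law_mul_ruzsaDist_le hμ hp₀ X T
        · exact sum_law_mul_ruzsaDist_le hμ hp₀ Y T

lemma le_condMutualInfo [Module (ZMod 2) G] (hmin : IsPFRMinimizer η p₀ p₁ p₂) (hη : 0 ≤ η)
    (hp₀ : p₀ ∈ stdSimplex ℝ G) (hμ : μ ∈ stdSimplex ℝ Ω) (A B : Ω → G) (S : Ω → γ) :
    pfrFunctional η p₀ p₁ p₂ ≤
      condMutualInfo μ A B S + condMutualInfo μ A (A + B) S + condMutualInfo μ B (A + B) S +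
        η * (entropy (p₀ ∗ law μ A) - entropy p₀ / 2 - condEntropy μ A ⟪A + B, S⟫ / 2) +
        η * (entropy (p₀ ∗ law μ B) - entropy p₀ / 2 - condEntropy μ B ⟪A + B, S⟫ / 2) := by
  have hle := hmin.le_of_condIndep hη hp₀ (condIndepCopies_mem_stdSimplex hμ ⟪A + B, S⟫)
    (condIndepRV_condIndepCopies hμ.1 ⟪A + B, S⟫ A B)
  rw [condEntropy_condIndepCopies_fst hμ, condEntropy_condIndepCopies_snd hμ, ← law_law _ _ A,
    ← law_law _ _ B, law_condIndepCopies_fst hμ.1, law_condIndepCopies_snd hμ.1] at hle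
  linarith [condEntropy_condIndepCopies_add_le hμ A B S]

end IsPFRMinimizer

end PFRMinimizer

section Fibring

variable {Ω G : Type*} [Fintype Ω] {μ : Ω → ℝ}

lemma IndepRV.condIndepRV {α β γ δ : Type*} [Finite α] [Finite β] [Finite γ] [Finite δ]
    {X : Ω → α} {Y : Ω → β} {Z : Ω → γ} {W : Ω → δ} (h : IndepRV μ ⟪X, Z⟫ ⟪Y, W⟫) :
    CondIndepRV μ X Y ⟪Z, W⟫ := by
  rintro ⟨c, d⟩ a b
  have hXYZW : law μ ⟪⟪X, Y⟫, ⟪Z, W⟫⟫ ((a, b), (c, d)) =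
      law μ ⟪X, Z⟫ (a, c) * law μ ⟪Y, W⟫ (b, d) :=
    (law_comp_injective μ ⟪⟪X, Z⟫, ⟪Y, W⟫⟫ (Equiv.prodProdProdComm α γ β δ).injective
      ((a, c), (b, d))).trans (h _ _)
  have hXZW : law μ ⟪X, ⟪Z, W⟫⟫ (a, (c, d)) = law μ ⟪X, Z⟫ (a, c) * law μ W d :=
    (law_comp_injective μ ⟪⟪X, Z⟫, W⟫ (Equiv.prodAssoc α γ δ).injective ((a, c), d)).trans
      (h.comp id Prod.snd _ _)
  have hYZW : law μ ⟪Y, ⟪Z, W⟫⟫ (b, (c, d)) = law μ Z c * law μ ⟪Y, W⟫ (b, d) :=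
    (law_comp_injective μ ⟪Z, ⟪Y, W⟫⟫ (e := fun t => (t.2.1, t.1, t.2.2))
      (by rintro ⟨⟩ ⟨⟩; grind) (c, (b, d))).trans (h.comp Prod.snd id _ _)
  have hZW : law μ ⟪Z, W⟫ (c, d) = law μ Z c * law μ W d := h.comp Prod.snd Prod.snd c d
  rw [law_condWeight, law_condWeight, law_condWeight, hXYZW, hXZW, hYZW, hZW]
  rcases eq_or_ne (law μ Z c) 0 with hc | hc
  · simp [hc]
  rcases eq_or_ne (law μ W d) 0 with hd | hd
  · simp [hd]
  field_simp

variable [AddCommGroup G] [Fintype G] {X Y Z W S : Ω → G}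

namespace IndepQuad

lemma entropyOf_add_prod_sum (hμ : μ ∈ stdSimplex ℝ Ω) (h : IndepQuad μ X Y Z W)
    (hS : X + Y + (Z + W) = S) : entropyOf μ ⟪X + Y, S⟫ =
      entropy (law μ X ∗ law μ Y) + entropy (law μ Z ∗ law μ W) := by
  rw [← h.entropyOf_add_prod_add hμ, ← hS]
  exact entropyOf_congr hμ.1 fun ω ω' => by simp only [Prod.mk.injEq, Pi.add_apply]; grind

lemma entropyOf_sum (hμ : μ ∈ stdSimplex ℝ Ω) (h : IndepQuad μ X Y Z W)
    (hS : X + Y + (Z + W) = S) :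
    entropyOf μ S = entropy (law μ X ∗ law μ Y ∗ (law μ Z ∗ law μ W)) := by
  have hsums : IndepRV μ (X + Y) (Z + W) :=
    (h.indep_pairs hμ).comp (fun t => t.1 + t.2) fun t => t.1 + t.2
  rw [← hS, hsums.entropyOf_add, (h.indep_left hμ).law_add, (h.indep_right hμ).law_add]

lemma entropyOf_prod_add_prod_add (hμ : μ ∈ stdSimplex ℝ Ω) (h : IndepQuad μ X Z Y W) :
    entropyOf μ ⟪X, ⟪X + Z, Y + W⟫⟫ =
      entropyOf μ X + entropyOf μ Z + entropy (law μ Y ∗ law μ W) := by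
  have hpair : IndepRV μ ⟪X, Z⟫ (Y + W) := (h.indep_pairs hμ).comp id fun t => t.1 + t.2
  rw [← (h.indep_right hμ).entropyOf_add, ← (h.indep_left hμ).entropyOf_prod hμ.1,
    ← hpair.entropyOf_prod hμ.1]
  exact entropyOf_congr hμ.1 fun ω ω' => by simp only [Prod.mk.injEq, Pi.add_apply]; grind

end IndepQuad

variable {η : ℝ} {p₀ p₁ p₂ : G → ℝ}

/-- The fibring estimate: minimality is applied to `(X + Z, Y + W)` and to `(X, Y)` conditioned
on `(X + Z, Y + W)`. -/
lemma IsPFRMinimizer.condMutualInfo_add_le (hmin : IsPFRMinimizer η p₀ p₁ p₂) (hη : 0 ≤ η)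
    (hp₀ : p₀ ∈ stdSimplex ℝ G) (hμ : μ ∈ stdSimplex ℝ Ω) (h : IndepQuad μ X Y Z W)
    (hS : X + Y + (Z + W) = S) :
    condMutualInfo μ (X + Y) (Y + W) S ≤
      ruzsaDist (law μ X) (law μ Y) + ruzsaDist (law μ Z) (law μ W) -
        2 * pfrFunctional η p₀ p₁ p₂ +
        η * (2 * ruzsaDist p₀ (law μ X) + 2 * ruzsaDist p₀ (law μ Y) +
          ruzsaDist (law μ X) (law μ Z) + ruzsaDist (law μ Y) (law μ W)) := by
  have hXZYW : IndepQuad μ X Z Y W := h.swap_middle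
  have hYWXZ : IndepQuad μ Y W X Z := h.swap_left.swap_right.swap_middle
  have hS' : Y + W + (X + Z) = S := by rw [← hS]; abel
  set T : Ω → G × G := ⟪X + Z, Y + W⟫ with hT_def
  have hcond : CondIndepRV μ X Y T :=
    ((hXZYW.indep_pairs hμ).comp (fun t => (t.1, t.1 + t.2)) fun t =>
      (t.1, t.1 + t.2)).condIndepRV
  have hT : entropyOf μ T = _ := hXZYW.entropyOf_add_prod_add hμ
  have hXT : entropyOf μ ⟪X, T⟫ = _ := hXZYW.entropyOf_prod_add_prod_add hμ
  have hYT : entropyOf μ ⟪Y, T⟫ = entropyOf μ ⟪Y, ⟪Y + W, X + Z⟫⟫ :=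
    entropyOf_congr hμ.1 fun ω ω' => by simp only [hT_def, Prod.mk.injEq]; tauto
  have hsumT : entropyOf μ ⟪X + Y, T⟫ = entropyOf μ ⟪⟪X + Y, Y + W⟫, S⟫ :=
    entropyOf_congr hμ.1 fun ω ω' => by
      simp only [hT_def, ← hS', Prod.mk.injEq, Pi.add_apply]; grind
  have hfibre := hmin.le_of_condIndep hη hp₀ hμ hcond
  rw [condEntropy_eq_sub hμ.1, condEntropy_eq_sub hμ.1, condEntropy_eq_sub hμ.1, hsumT, hYT, hXT,
    hYWXZ.entropyOf_prod_add_prod_add hμ, hT] at hfibre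
  have hX := law_mem_stdSimplex hμ X
  have hY := law_mem_stdSimplex hμ Y
  have hZ := law_mem_stdSimplex hμ Z
  have hW := law_mem_stdSimplex hμ W
  have hbase := hmin.le (addConv_mem_stdSimplex hX hZ) (addConv_mem_stdSimplex hY hW)
  have hKVX := mul_le_mul_of_nonneg_left (entropy_addConv_addConv_add_le hp₀ hX hZ) hη
  have hKVY := mul_le_mul_of_nonneg_left (entropy_addConv_addConv_add_le hp₀ hY hW) hη
  rw [addConv_assoc] at hKVX hKVY
  rw [condMutualInfo_eq_entropyOf hμ.1, h.entropyOf_add_prod_sum hμ hS,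
    hYWXZ.entropyOf_add_prod_sum hμ hS',
    hXZYW.entropyOf_sum hμ (S := S) (by rw [← hS]; abel)]
  simp only [pfrFunctional, ruzsaDist, entropyOf] at *
  linarith

end Fibring

section Endgame

variable {G : Type*} [AddCommGroup G] [Fintype G] {η : ℝ} {p₀ p₁ p₂ : G → ℝ}

lemma entropy_addConv_addConv_addConv_le (hp₁ : p₁ ∈ stdSimplex ℝ G) (hp₂ : p₂ ∈ stdSimplex ℝ G) :
    entropy (p₁ ∗ p₂ ∗ (p₂ ∗ p₁)) ≤ 4 * entropy (p₁ ∗ p₂) - entropy p₁ - 2 * entropy p₂ := by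
  have h₂₁ := addConv_mem_stdSimplex hp₂ hp₁
  have hquad := entropy_addConv_addConv_add_le hp₁ hp₂ h₂₁
  have htriple := entropy_addConv_addConv_add_le hp₂ hp₂ hp₁
  have hdouble := entropy_addConv_triangle hp₂ hp₁ hp₂
  rw [addConv_assoc] at htriple
  rw [addConv_comm p₂ p₁] at *
  linarith

lemma entropy_addConv_addConv_addConv_le_symm (hp₁ : p₁ ∈ stdSimplex ℝ G)
    (hp₂ : p₂ ∈ stdSimplex ℝ G) :
    entropy (p₁ ∗ p₂ ∗ (p₂ ∗ p₁)) ≤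
      4 * entropy (p₁ ∗ p₂) - 3 * (entropy p₁ / 2 + entropy p₂ / 2) := by
  have h₁₂ := entropy_addConv_addConv_addConv_le hp₁ hp₂
  have h₂₁ := entropy_addConv_addConv_addConv_le hp₂ hp₁
  rw [addConv_comm p₂ p₁] at *
  linarith

lemma entropy_addConv_addConv_le_symm (hp₀ : p₀ ∈ stdSimplex ℝ G) (hp₁ : p₁ ∈ stdSimplex ℝ G)
    (hp₂ : p₂ ∈ stdSimplex ℝ G) :
    2 * entropy (p₀ ∗ (p₁ ∗ p₂)) ≤ entropy (p₀ ∗ p₁) + entropy (p₀ ∗ p₂) +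
      2 * entropy (p₁ ∗ p₂) - entropy p₁ - entropy p₂ := by
  have h₁₂ := entropy_addConv_addConv_add_le hp₀ hp₁ hp₂
  have h₂₁ := entropy_addConv_addConv_add_le hp₀ hp₂ hp₁
  rw [addConv_assoc] at h₁₂ h₂₁
  rw [addConv_comm p₂ p₁] at h₂₁
  linarith

namespace IsPFRMinimizer

section MutualInformation

variable {Ω : Type*} [Fintype Ω] {μ : Ω → ℝ} {X Y Z W S : Ω → G}

lemma condMutualInfo_add_le_two_mul (hmin : IsPFRMinimizer η p₀ p₁ p₂) (hη : 0 ≤ η)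
    (hp₀ : p₀ ∈ stdSimplex ℝ G) (hμ : μ ∈ stdSimplex ℝ Ω) (h : IndepQuad μ X Y Z W)
    (hX : law μ X = p₁) (hY : law μ Y = p₂) (hZ : law μ Z = p₂) (hW : law μ W = p₁)
    (hS : X + Y + (Z + W) = S) :
    condMutualInfo μ (X + Y) (Y + W) S ≤ η * (2 * ruzsaDist p₁ p₂) := by
  have hle := hmin.condMutualInfo_add_le hη hp₀ hμ h hS
  rw [hX, hY, hZ, hW, ruzsaDist_comm p₂ p₁, pfrFunctional] at hle
  linarith

lemma condMutualInfo_add_le_four_mul (hmin : IsPFRMinimizer η p₀ p₁ p₂) (hη : 0 ≤ η)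
    (hp₀ : p₀ ∈ stdSimplex ℝ G) (hμ : μ ∈ stdSimplex ℝ Ω) (h : IndepQuad μ X Y Z W)
    (hX : law μ X = p₂) (hY : law μ Y = p₁) (hZ : law μ Z = p₂) (hW : law μ W = p₁)
    (hS : X + Y + (Z + W) = S) :
    condMutualInfo μ (X + Y) (Y + W) S ≤ η * (4 * ruzsaDist p₁ p₂) := by
  have hle := hmin.condMutualInfo_add_le hη hp₀ hμ h hS
  have hp₁ := mul_le_mul_of_nonneg_left (ruzsaDist_self_le hmin.left_mem hmin.right_mem) hη
  have hp₂ := mul_le_mul_of_nonneg_left (ruzsaDist_self_le hmin.right_mem hmin.left_mem) hη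
  rw [ruzsaDist_comm p₂ p₁] at hp₂
  rw [hX, hY, hZ, hW, ruzsaDist_comm p₂ p₁, pfrFunctional] at hle
  linarith

end MutualInformation

/-- The endgame: the entropic Balog–Szemerédi–Gowers lemma is applied to `U = X₁ + X₂` and
`V = X₂ + X₄`, whose sum is `X₁ + X₄`. -/
lemma ruzsaDist_le_mul [Module (ZMod 2) G] (hmin : IsPFRMinimizer η p₀ p₁ p₂) (hη : 0 ≤ η)
    (hp₀ : p₀ ∈ stdSimplex ℝ G) :
    ruzsaDist p₁ p₂ ≤ η * (14 + 4 * η) * ruzsaDist p₁ p₂ := by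
  have hp₁ := hmin.left_mem
  have hp₂ := hmin.right_mem
  obtain ⟨μ, hμ, X₁, X₂, X₃, X₄, hX, hX₁, hX₂, hX₃, hX₄⟩ := exists_indepQuad hp₁ hp₂ hp₂ hp₁
  obtain ⟨S, hS⟩ : ∃ S, X₁ + X₂ + (X₃ + X₄) = S := ⟨_, rfl⟩
  have hX₂₁ : IndepQuad μ X₂ X₁ X₃ X₄ := hX.swap_left
  have hX₂₄ : IndepQuad μ X₂ X₄ X₃ X₁ := hX₂₁.swap_middle.swap_right.swap_middle
  have hUV := hmin.condMutualInfo_add_le_two_mul hη hp₀ hμ hX hX₁ hX₂ hX₃ hX₄ hS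
  have hU := hmin.condMutualInfo_add_le_four_mul hη hp₀ hμ hX₂₁ hX₂ hX₁ hX₃ hX₄ (S := S)
    (by rw [← hS]; abel)
  have hV := hmin.condMutualInfo_add_le_four_mul hη hp₀ hμ hX₂₄ hX₂ hX₄ hX₃ hX₁ (S := S)
    (by rw [← hS]; abel)
  rw [add_comm X₂ X₁] at hU
  rw [add_comm X₄ X₁] at hV
  have hentU := hX.entropyOf_add_prod_sum hμ hS
  have hentV := hX₂₄.entropyOf_add_prod_sum hμ (S := S) (by rw [← hS]; abel)
  have hentS := hX.entropyOf_sum hμ hS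
  have hlawU : law μ (X₁ + X₂) = p₁ ∗ p₂ := by rw [(hX.indep_left hμ).law_add, hX₁, hX₂]
  have hlawV : law μ (X₂ + X₄) = p₁ ∗ p₂ := by
    rw [(hX₂₄.indep_left hμ).law_add, hX₂, hX₄, addConv_comm]
  have hmain := hmin.le_condMutualInfo hη hp₀ hμ (X₁ + X₂) (X₂ + X₄) S
  rw [ZModModule.add_add_add_cancel, hlawU, hlawV, condEntropy_prod_eq_sub hμ.1,
    condEntropy_prod_eq_sub hμ.1, condEntropy_eq_sub hμ.1, condEntropy_eq_sub hμ.1, hentU, hentV,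
    hentS, hX₁, hX₂, hX₃, hX₄, addConv_comm p₂ p₁] at hmain
  have hS_le := mul_le_mul_of_nonneg_left (entropy_addConv_addConv_addConv_le_symm hp₁ hp₂) hη
  have hp₀_le := mul_le_mul_of_nonneg_left (entropy_addConv_addConv_le_symm hp₀ hp₁ hp₂) hη
  have hηU := mul_le_mul_of_nonneg_left hU hη
  have hηV := mul_le_mul_of_nonneg_left hV hη
  rw [addConv_comm p₂ p₁] at hS_le
  simp only [pfrFunctional, ruzsaDist] at *
  linarith

lemma ruzsaDist_eq_zero [Module (ZMod 2) G] (hmin : IsPFRMinimizer η p₀ p₁ p₂) (hη : 0 ≤ η)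
    (hη_small : η * (14 + 4 * η) < 1) (hp₀ : p₀ ∈ stdSimplex ℝ G) : ruzsaDist p₁ p₂ = 0 := by
  nlinarith [hmin.ruzsaDist_le_mul hη hp₀, ruzsaDist_nonneg hmin.left_mem hmin.right_mem]

end IsPFRMinimizer

end Endgame

section UniformWeight

variable {α : Type*}

open scoped Classical in
/-- The density of the uniform distribution on a finite set. -/
noncomputable def uniformWeight (s : Finset α) (a : α) : ℝ := if a ∈ s then (#s : ℝ)⁻¹ else 0

lemma uniformWeight_mem_stdSimplex [Fintype α] {s : Finset α} (hs : s.Nonempty) :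
    uniformWeight s ∈ stdSimplex ℝ α := by
  have hcard : (#s : ℝ) ≠ 0 := Nat.cast_ne_zero.2 hs.card_ne_zero
  refine ⟨fun a => ?_, ?_⟩
  · unfold uniformWeight
    positivity
  · simp [uniformWeight, hcard]

lemma uniformWeight_ne_zero {s : Finset α} {a : α} : uniformWeight s a ≠ 0 ↔ a ∈ s := by
  simpa [uniformWeight] using ne_empty_of_mem

lemma entropy_uniformWeight [Fintype α] {s : Finset α} (hs : s.Nonempty) :
    entropy (uniformWeight s) = Real.log #s := by
  rw [entropy_eq_neg_log_of_flat (uniformWeight_mem_stdSimplex hs) (c := (#s : ℝ)⁻¹)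
    fun a ha => if_pos (uniformWeight_ne_zero.1 ha), Real.log_inv, neg_neg]

lemma continuous_entropy [Fintype α] : Continuous fun p : α → ℝ => entropy p :=
  continuous_finsetSum _ fun a _ => Real.continuous_negMulLog.comp (continuous_apply a)

lemma exists_exp_neg_entropy_le [Fintype α] {p : α → ℝ} (hp : p ∈ stdSimplex ℝ α) :
    ∃ g, Real.exp (-entropy p) ≤ p g := by
  have hsum : ∑ g, p g * -Real.log (p g) = entropy p :=
    sum_congr rfl fun g _ => by rw [Real.negMulLog]; ring
  obtain ⟨g, hne, hg⟩ := exists_le_of_weighted_sum_le hp hsum.le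
  exact ⟨g, (Real.le_log_iff_exp_le ((hp.1 g).lt_of_ne' hne)).1 (by linarith)⟩

end UniformWeight

section EqualityCase

variable {G : Type*} [AddCommGroup G] {p : G → ℝ}

/-- The group of periods of a function. It is the subgroup extracted from a distribution whose
entropy does not grow under convolution with itself. -/
def periods (p : G → ℝ) : AddSubgroup G where
  carrier := {v | ∀ g, p (g + v) = p g}
  zero_mem' g := by rw [add_zero]
  add_mem' {v w} hv hw g := by rw [← add_assoc, hw, hv]
  neg_mem' {v} hv g := by rw [← hv (g + -v), neg_add_cancel_right]

open scoped Classical in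
lemma card_filter_sub_mem [Fintype G] (H : AddSubgroup G) (x : G) :
    #{g | g - x ∈ H} = Nat.card H := by
  rw [Nat.card_eq_fintype_card, Fintype.card_subtype]
  exact card_equiv (Equiv.subRight x) (by simp)

/-- The equality case of Jensen's inequality in the proof of `entropy_le_entropy_addConv_right`. -/
lemma apply_sub_eq_of_entropy_addConv_self_le [Fintype G] (hp : p ∈ stdSimplex ℝ G)
    (h : entropy (p ∗ p) ≤ entropy p) {a b : G} (ha : p a ≠ 0) (hb : p b ≠ 0) (g : G) :
    p (g - a) = p (g - b) := by
  have hjensen (g : G) : ∑ h, p h * Real.negMulLog (p (g - h)) ≤ Real.negMulLog ((p ∗ p) g) :=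
    Real.concaveOn_negMulLog.le_map_sum (fun h _ => hp.1 h) hp.2 fun h _ => hp.1 (g - h)
  have hsum : ∑ g, ∑ h, p h * Real.negMulLog (p (g - h)) = entropy p := by
    have htranslate (h : G) : ∑ g, Real.negMulLog (p (g - h)) = entropy p :=
      (Equiv.subRight h).sum_comp fun g => Real.negMulLog (p g)
    rw [sum_comm]
    simp only [← mul_sum, htranslate, ← sum_mul, hp.2, one_mul]
  have hequality : ∑ h, p h * Real.negMulLog (p (g - h)) = Real.negMulLog ((p ∗ p) g) :=
    (sum_eq_sum_iff_of_le fun g _ => hjensen g).1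
      ((sum_le_sum fun g _ => hjensen g).antisymm (h.trans hsum.ge)) g (mem_univ g)
  exact (Real.strictConcaveOn_negMulLog.map_sum_eq_iff_of_nonneg (fun h _ => hp.1 h) hp.2
    fun h _ => hp.1 (g - h)).1 hequality.symm (mem_univ a) ha (mem_univ b) hb

open scoped Classical in
lemma exists_eq_uniformWeight_of_entropy_addConv_self_le [Fintype G] (hp : p ∈ stdSimplex ℝ G)
    (h : entropy (p ∗ p) ≤ entropy p) :
    ∃ (H : AddSubgroup G) (x : G), p = uniformWeight ({g | g - x ∈ H} : Finset G) := by
  obtain ⟨x, -, hx⟩ := exists_ne_zero_of_sum_ne_zero (hp.2.trans_ne one_ne_zero)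
  have hperiod {a : G} (ha : p a ≠ 0) : a - x ∈ periods p := fun g => by
    simpa [add_sub_assoc] using apply_sub_eq_of_entropy_addConv_self_le hp h hx ha (g + a)
  have hvalue (g : G) : p g = if g - x ∈ periods p then p x else 0 := by
    split_ifs with hg
    · simpa using hg x
    · exact not_not.1 fun hne => hg (hperiod hne)
  have hnorm : Nat.card (periods p) * p x = 1 := by
    rw [← hp.2, sum_congr rfl fun g _ => hvalue g, ← sum_filter, sum_const, card_filter_sub_mem,
      nsmul_eq_mul]
  refine ⟨periods p, x, funext fun g => ?_⟩
  rw [hvalue, uniformWeight, card_filter_sub_mem, eq_inv_of_mul_eq_one_right hnorm]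
  simp

end EqualityCase

section PolynomialFreimanRuzsa

variable {G : Type*} [AddCommGroup G] [Fintype G] {p₀ : G → ℝ}

lemma continuous_ruzsaDist {T : Type*} [TopologicalSpace T] {p q : T → G → ℝ}
    (hp : Continuous p) (hq : Continuous q) : Continuous fun t => ruzsaDist (p t) (q t) := by
  have hconv : Continuous fun t => p t ∗ q t := by
    unfold addConv
    fun_prop
  exact ((continuous_entropy.comp hconv).sub ((continuous_entropy.comp hp).div_const 2)).sub
    ((continuous_entropy.comp hq).div_const 2)

lemma exists_isPFRMinimizer (η : ℝ) (p₀ : G → ℝ) : ∃ p₁ p₂, IsPFRMinimizer η p₀ p₁ p₂ := by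
  have hcompact : IsCompact (stdSimplex ℝ G ×ˢ stdSimplex ℝ G) :=
    (isCompact_stdSimplex ℝ G).prod (isCompact_stdSimplex ℝ G)
  have hnonempty : (stdSimplex ℝ G).Nonempty := Set.nonempty_coe_sort.1 inferInstance
  have hcontinuous : Continuous fun t : (G → ℝ) × (G → ℝ) => pfrFunctional η p₀ t.1 t.2 :=
    ((continuous_ruzsaDist continuous_fst continuous_snd).add
      ((continuous_ruzsaDist continuous_const continuous_fst).const_mul η)).add
      ((continuous_ruzsaDist continuous_const continuous_snd).const_mul η)
  obtain ⟨⟨p₁, p₂⟩, ⟨hp₁, hp₂⟩, hmin⟩ := hcompact.exists_isMinOn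
    (hnonempty.prod hnonempty) hcontinuous.continuousOn
  exact ⟨p₁, p₂, hp₁, hp₂, fun hq₁ hq₂ => isMinOn_iff.1 hmin (_, _) ⟨hq₁, hq₂⟩⟩

open scoped Classical in
lemma addConv_uniformWeight_coset (p : G → ℝ) (H : AddSubgroup G) (x g : G) :
    (p ∗ uniformWeight ({h | h - x ∈ H} : Finset G)) g =
      (Nat.card H : ℝ)⁻¹ * ∑ h with h - (g - x) ∈ H, p h := by
  rw [addConv, mul_sum, sum_filter]
  refine sum_congr rfl fun h _ => ?_
  have hmem : g - h - x ∈ H ↔ h - (g - x) ∈ H := by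
    rw [← neg_mem_iff]
    abel_nf
  simp [uniformWeight, card_filter_sub_mem, hmem, mul_comm]

open scoped Classical in
lemma exists_addSubgroup_of_ruzsaDist [Module (ZMod 2) G] (hp₀ : p₀ ∈ stdSimplex ℝ G) :
    ∃ (H : AddSubgroup G) (x : G),
      Real.log (Nat.card H) ≤ entropy p₀ + 44 * ruzsaDist p₀ p₀ ∧
        Real.exp (-(44 * ruzsaDist p₀ p₀)) ≤ ∑ g with g - x ∈ H, p₀ g := by
  obtain ⟨p₁, p₂, hmin⟩ := exists_isPFRMinimizer (1 / 20) p₀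
  have hzero := hmin.ruzsaDist_eq_zero (by norm_num) (by norm_num) hp₀
  have hp₁ := hmin.left_mem
  have hself : entropy (p₁ ∗ p₁) ≤ entropy p₁ := by
    have hle := ruzsaDist_self_le hp₁ hmin.right_mem
    rw [hzero, ruzsaDist] at hle
    linarith
  obtain ⟨H, x, hcoset⟩ := exists_eq_uniformWeight_of_entropy_addConv_self_le hp₁ hself
  have hdist : ruzsaDist p₀ p₁ ≤ 22 * ruzsaDist p₀ p₀ := by
    have hle := hmin.le hp₀ hp₀
    have hnonneg := ruzsaDist_nonneg hp₀ hmin.right_mem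
    rw [pfrFunctional, pfrFunctional, hzero] at hle
    linarith
  have hcard : (0 : ℝ) < Nat.card H := Nat.cast_pos.2 Nat.card_pos
  have hentropy : entropy p₁ = Real.log (Nat.card H) := by
    rw [hcoset, entropy_uniformWeight ⟨x, by simp⟩, card_filter_sub_mem]
  have hle₀ := entropy_le_entropy_addConv_left hp₀ hp₁
  have hle₁ := entropy_le_entropy_addConv_right hp₀ hp₁
  obtain ⟨g, hg⟩ := exists_exp_neg_entropy_le (addConv_mem_stdSimplex hp₀ hp₁)
  refine ⟨H, g - x, ?_, ?_⟩
  · rw [ruzsaDist] at hdist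
    linarith
  · calc Real.exp (-(44 * ruzsaDist p₀ p₀)) ≤ Real.exp (entropy p₁ - entropy (p₀ ∗ p₁)) := by
          refine Real.exp_le_exp.2 ?_
          rw [ruzsaDist] at hdist
          linarith
      _ = Nat.card H * Real.exp (-entropy (p₀ ∗ p₁)) := by
          rw [sub_eq_add_neg, Real.exp_add, hentropy, Real.exp_log hcard]
      _ ≤ Nat.card H * (p₀ ∗ p₁) g := by gcongr
      _ = ∑ h with h - (g - x) ∈ H, p₀ h := by
          rw [hcoset, addConv_uniformWeight_coset, mul_inv_cancel_left₀ hcard.ne']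

end PolynomialFreimanRuzsa

section BalogSzemerediGowers

variable {Ω α γ G : Type*} [Fintype Ω] [Fintype G] {μ : Ω → ℝ}

lemma entropyOf_le_log_card [Fintype α] (hμ : μ ∈ stdSimplex ℝ Ω) {X : Ω → α} {A : Finset α}
    (hA : ∀ ω, μ ω ≠ 0 → X ω ∈ A) : entropyOf μ X ≤ Real.log #A :=
  entropy_le_log_card (law_mem_stdSimplex hμ X) fun a ha => by
    obtain ⟨ω, hω, rfl⟩ := exists_of_law_ne_zero ha
    exact hA ω hω

lemma condEntropy_const [Fintype α] [Fintype γ] (hμ : μ ∈ stdSimplex ℝ Ω) (X : Ω → α) (c : γ) :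
    condEntropy μ X (fun _ => c) = entropyOf μ X := by
  have hzero : entropyOf μ (fun _ => c) = 0 := le_antisymm
    (by simpa using entropyOf_le_log_card hμ (A := {c}) fun _ _ => mem_singleton_self c)
    (entropy_nonneg (law_mem_stdSimplex hμ _))
  have hpair : entropyOf μ ⟪X, fun _ => c⟫ = entropyOf μ X :=
    entropyOf_congr hμ.1 fun ω ω' => by simp
  rw [condEntropy_eq_sub hμ.1, hzero, hpair, sub_zero]

lemma condWeight_comp_injective (μ : Ω → ℝ) (T : Ω → γ) {e : γ → α} (he : Function.Injective e)
    (t : γ) : condWeight μ (e ∘ T) (e t) = condWeight μ T t := by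
  funext ω
  rw [condWeight, condWeight, law_comp_injective μ T he]
  congr 1
  simp [he.eq_iff]

lemma law_condWeight_condIndepCopies_fst (hμ : ∀ ω, 0 ≤ μ ω) (T : Ω → γ) (t : γ) (X : Ω → α) :
    law (condWeight (condIndepCopies μ T) (T ∘ Prod.fst) t) (X ∘ Prod.fst) =
      law (condWeight μ T t) X := by
  funext a
  rw [law_condWeight, law_condWeight]
  change law (condIndepCopies μ T) (⟪X, T⟫ ∘ Prod.fst) (a, t) /
    law (condIndepCopies μ T) (T ∘ Prod.fst) t = _
  rw [← law_law, ← law_law, law_condIndepCopies_fst hμ]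

lemma law_eq_of_injOn_support {X : Ω → α} {c : ℝ}
    (hinj : ∀ ω ω', μ ω ≠ 0 → μ ω' ≠ 0 → X ω = X ω' → ω = ω') (hflat : ∀ ω, μ ω ≠ 0 → μ ω = c)
    {a : α} (ha : law μ X a ≠ 0) : law μ X a = c := by
  classical
  obtain ⟨ω, hω, rfl⟩ := exists_of_law_ne_zero ha
  rw [law, sum_eq_single ω, hflat ω hω]
  · exact fun ω' hω' hne => not_not.1 fun h => hne (hinj ω' ω h hω (mem_filter.1 hω').2)
  · simp

lemma exists_eq_uniformWeight_of_flat [Fintype α] {p : α → ℝ} (hp : p ∈ stdSimplex ℝ α) {c : ℝ}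
    (hflat : ∀ a, p a ≠ 0 → p a = c) : ∃ s : Finset α, s.Nonempty ∧ p = uniformWeight s := by
  classical
  obtain ⟨a₀, -, ha₀⟩ := exists_ne_zero_of_sum_ne_zero (hp.2.trans_ne one_ne_zero)
  have hnorm : #{a | p a ≠ 0} * c = 1 := by
    rw [← hp.2, ← sum_filter_ne_zero, sum_congr rfl fun a ha => hflat a (mem_filter.1 ha).2,
      sum_const, nsmul_eq_mul]
  refine ⟨({a | p a ≠ 0} : Finset α), ⟨a₀, by simpa using ha₀⟩, funext fun a => ?_⟩
  rw [uniformWeight, ← eq_inv_of_mul_eq_one_right hnorm]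
  split_ifs with ha
  · exact hflat a (by simpa using ha)
  · simpa using ha

lemma of_condWeight_uniformWeight_ne_zero {E : Finset Ω} {T : Ω → γ} {t : γ} {ω : Ω}
    (h : condWeight (uniformWeight E) T t ω ≠ 0) : ω ∈ E ∧ T ω = t := by
  by_cases ht : T ω = t
  · exact ⟨uniformWeight_ne_zero.1 fun hω => h (by simp [condWeight, hω]), ht⟩
  · exact absurd (if_neg ht) h

lemma exists_law_condWeight_eq_uniformWeight [Finite α] {E : Finset Ω} {X : Ω → α} {T : Ω → γ}
    {t : γ} (ht : law (uniformWeight E) T t ≠ 0) (hinj : Function.Injective ⟪X, T⟫) :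
    ∃ s : Finset α, s.Nonempty ∧ law (condWeight (uniformWeight E) T t) X = uniformWeight s := by
  have := Fintype.ofFinite α
  obtain ⟨ω, hω, -⟩ := exists_of_law_ne_zero ht
  have hE := uniformWeight_mem_stdSimplex ⟨ω, uniformWeight_ne_zero.1 hω⟩
  refine exists_eq_uniformWeight_of_flat
    (law_mem_stdSimplex (condWeight_mem_stdSimplex hE.1 ht) X) fun a =>
    law_eq_of_injOn_support (c := (#E : ℝ)⁻¹ / law (uniformWeight E) T t)
      (fun ω ω' hω hω' h => hinj (Prod.ext h ?_)) fun ω hω => ?_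
  · exact (of_condWeight_uniformWeight_ne_zero hω).2.trans
      (of_condWeight_uniformWeight_ne_zero hω').2.symm
  · obtain ⟨hωE, hωT⟩ := of_condWeight_uniformWeight_ne_zero hω
    rw [condWeight, if_pos hωT, uniformWeight, if_pos hωE]

open scoped Classical in
lemma sum_filter_uniformWeight [Fintype α] (s : Finset α) (P : α → Prop) :
    ∑ a with P a, uniformWeight s a = #{a ∈ s | P a} / #s := by
  simp only [uniformWeight, sum_ite_mem, sum_const, nsmul_eq_mul, div_eq_mul_inv]
  congr 3
  ext a
  simp [and_comm]

variable [AddCommGroup G]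

lemma entropyOf_prod_add_left (hμ : ∀ ω, 0 ≤ μ ω) (A B : Ω → G) :
    entropyOf μ ⟪A, A + B⟫ = entropyOf μ ⟪A, B⟫ :=
  entropyOf_congr hμ fun ω ω' => by simp only [Prod.mk.injEq, Pi.add_apply]; grind

lemma entropyOf_prod_add_right (hμ : ∀ ω, 0 ≤ μ ω) (A B : Ω → G) :
    entropyOf μ ⟪B, A + B⟫ = entropyOf μ ⟪A, B⟫ :=
  entropyOf_congr hμ fun ω ω' => by simp only [Prod.mk.injEq, Pi.add_apply]; grind

variable [Module (ZMod 2) G]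

lemma exists_ruzsaDist_condWeight_le (hμ : μ ∈ stdSimplex ℝ Ω) {A B : Ω → G} {M : ℝ}
    (hA : entropyOf μ A ≤ M) (hB : entropyOf μ B ≤ M) (hAB : entropyOf μ (A + B) ≤ M) :
    ∃ g, law μ (A + B) g ≠ 0 ∧ ∃ q ∈ stdSimplex ℝ G,
      ruzsaDist (law (condWeight μ (A + B) g) A) q +
        (M - entropy (law (condWeight μ (A + B) g) A)) ≤ 4 * (2 * M - entropyOf μ ⟪A, B⟫) := by
  set S : Ω → Unit := fun _ => ()
  set T : Ω → G × Unit := ⟪A + B, S⟫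
  set ν := condIndepCopies μ T
  have hT : law ν (T ∘ Prod.fst) ∈ stdSimplex ℝ (G × Unit) :=
    law_mem_stdSimplex (condIndepCopies_mem_stdSimplex hμ T) _
  have hbsg := condEntropy_condIndepCopies_add_le hμ A B S
  have hdist := (condIndepRV_condIndepCopies hμ.1 T A B).sum_law_mul_ruzsaDist
  have hentropy : condEntropy μ A T = entropyOf μ ⟪A, B⟫ - entropyOf μ (A + B) := by
    rw [condEntropy_eq_sub hμ.1]
    congr 1 <;> refine entropyOf_congr hμ.1 fun ω ω' => ?_ <;>
      simp only [T, S, Prod.mk.injEq, Pi.add_apply] <;> grind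
  have hmean : ∑ t, law ν (T ∘ Prod.fst) t *
      (ruzsaDist (law (condWeight ν (T ∘ Prod.fst) t) (A ∘ Prod.fst))
        (law (condWeight ν (T ∘ Prod.fst) t) (B ∘ Prod.snd)) +
      (M - entropyOf (condWeight ν (T ∘ Prod.fst) t) (A ∘ Prod.fst))) ≤
      4 * (2 * M - entropyOf μ ⟪A, B⟫) := by
    simp only [mul_add, mul_sub, sum_add_distrib, sum_sub_distrib, ← sum_mul, hT.2]
    change _ + (1 * M - condEntropy ν (A ∘ Prod.fst) (T ∘ Prod.fst)) ≤ _
    rw [hdist, condEntropy_condIndepCopies_fst hμ, condEntropy_condIndepCopies_snd hμ]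
    simp only [condMutualInfo, S, condEntropy_const hμ, entropyOf_prod_add_left hμ.1,
      entropyOf_prod_add_right hμ.1] at hbsg
    linarith
  obtain ⟨⟨g, ⟨⟩⟩, ht, hle⟩ := exists_le_of_weighted_sum_le hT hmean
  have hinj : Function.Injective fun g : G => (g, ()) := Prod.mk_left_injective ()
  have hlaw : law ν (T ∘ Prod.fst) (g, ()) = law μ (A + B) g := by
    rw [← law_law, law_condIndepCopies_fst hμ.1]
    exact law_comp_injective μ (A + B) hinj g
  have hcond : condWeight μ T (g, ()) = condWeight μ (A + B) g :=
    condWeight_comp_injective μ (A + B) hinj g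
  refine ⟨g, hlaw ▸ ht, _, law_mem_stdSimplex (condWeight_mem_stdSimplex
    (condIndepCopies_mem_stdSimplex hμ T).1 ht) (B ∘ Prod.snd), ?_⟩
  rwa [entropyOf, law_condWeight_condIndepCopies_fst hμ.1, hcond] at hle

open scoped Classical in
lemma exists_subset_ruzsaDist_le {A : Finset G} {E : Finset (G × G)} (hne : E.Nonempty)
    (hE : ∀ t ∈ E, t.1 ∈ A ∧ t.2 ∈ A ∧ t.1 + t.2 ∈ A) {κ : ℝ}
    (hκ : 2 * Real.log #A - Real.log #E = κ) :
    ∃ A' ⊆ A, A'.Nonempty ∧ ruzsaDist (uniformWeight A') (uniformWeight A') ≤ 8 * κ ∧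
      Real.log #A - Real.log #A' ≤ 4 * κ := by
  set μ := uniformWeight E
  have hμ : μ ∈ stdSimplex ℝ (G × G) := uniformWeight_mem_stdSimplex hne
  have hmem (t : G × G) (ht : μ t ≠ 0) : t.1 ∈ A ∧ t.2 ∈ A ∧ t.1 + t.2 ∈ A :=
    hE t (uniformWeight_ne_zero.1 ht)
  obtain ⟨g, hg, q, hq, hle⟩ := exists_ruzsaDist_condWeight_le hμ
    (entropyOf_le_log_card hμ fun t ht => (hmem t ht).1)
    (entropyOf_le_log_card hμ fun t ht => (hmem t ht).2.1)
    (entropyOf_le_log_card hμ fun t ht => (hmem t ht).2.2)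
  set ν := condWeight μ (Prod.fst + Prod.snd) g
  obtain ⟨A', hA'ne, hA'⟩ := exists_law_condWeight_eq_uniformWeight (X := Prod.fst) hg
    fun t t' h => by
      obtain ⟨hfst, hsum⟩ := Prod.mk.inj h
      exact Prod.ext hfst (add_left_cancel (hsum.trans (congrArg (· + t'.2) hfst.symm)))
  have hA'A : A' ⊆ A := fun a ha => by
    obtain ⟨t, ht, rfl⟩ := exists_of_law_ne_zero (hA' ▸ uniformWeight_ne_zero.2 ha)
    exact (hE t (of_condWeight_uniformWeight_ne_zero ht).1).1
  have hcard : Real.log #A' ≤ Real.log #A := Real.log_le_log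
    (Nat.cast_pos.2 hA'ne.card_pos) (Nat.cast_le.2 (card_le_card hA'A))
  have hA'mem := uniformWeight_mem_stdSimplex hA'ne
  have hdist := ruzsaDist_self_le hA'mem hq
  have hdist_nonneg := ruzsaDist_nonneg hA'mem hq
  have hentropy : entropyOf μ ⟪Prod.fst, Prod.snd⟫ = Real.log #E := by
    rw [entropyOf, show law μ ⟪Prod.fst, Prod.snd⟫ = μ from law_id μ, entropy_uniformWeight hne]
  rw [hA', entropy_uniformWeight hA'ne, hentropy, hκ] at hle
  exact ⟨A', hA'A, hA'ne, by linarith, by linarith⟩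

end BalogSzemerediGowers

lemma div_sq_pow_eq_exp_neg {a e : ℝ} (ha : 0 < a) (he : 0 < e) (k : ℕ) :
    (e / a ^ 2) ^ k = Real.exp (-(k * (2 * Real.log a - Real.log e))) := by
  rw [← Real.exp_log (div_pos he (pow_pos ha 2)), Real.log_div he.ne' (by positivity),
    Real.log_pow, ← Real.exp_nat_mul]
  congr 1
  push_cast
  ring

open scoped Classical in
lemma exists_submodule_of_card_triples {G : Type*} [AddCommGroup G] [Module (ZMod 2) G] [Finite G]
    {A : Finset G} {E : Finset (G × G)} (hne : E.Nonempty)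
    (hE : ∀ t ∈ E, t.1 ∈ A ∧ t.2 ∈ A ∧ t.1 + t.2 ∈ A) {d : ℝ} (hd : d = #E / (#A : ℝ) ^ 2) :
    ∃ (H : Submodule (ZMod 2) G) (x : G),
      Nat.card H * d ^ 352 ≤ #A ∧ #A * d ^ 356 ≤ (#{g ∈ A | g - x ∈ H} : ℝ) := by
  have := Fintype.ofFinite G
  have hE₀ : (0 : ℝ) < #E := Nat.cast_pos.2 hne.card_pos
  obtain ⟨t, ht⟩ := hne
  have hA₀ : (0 : ℝ) < #A := Nat.cast_pos.2 (card_pos.2 ⟨_, (hE t ht).1⟩)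
  obtain ⟨A', hA'A, hA'ne, hdist, hcard⟩ := exists_subset_ruzsaDist_le ⟨t, ht⟩ hE rfl
  obtain ⟨H, x, hH, hmass⟩ := exists_addSubgroup_of_ruzsaDist (uniformWeight_mem_stdSimplex hA'ne)
  rw [entropy_uniformWeight hA'ne] at hH
  set κ := 2 * Real.log #A - Real.log #E
  have hexp (k : ℕ) : d ^ k = Real.exp (-(k * κ)) := hd ▸ div_sq_pow_eq_exp_neg hA₀ hE₀ k
  have hA'₀ : (0 : ℝ) < #A' := Nat.cast_pos.2 hA'ne.card_pos
  refine ⟨AddSubgroup.toZModSubmodule 2 H, x, ?_, ?_⟩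
  · change Nat.card H * d ^ 352 ≤ #A
    rw [hexp, Real.exp_neg, ← div_eq_mul_inv, div_le_iff₀ (Real.exp_pos _),
      ← Real.log_le_log_iff (Nat.cast_pos.2 Nat.card_pos) (by positivity),
      Real.log_mul hA₀.ne' (Real.exp_pos _).ne', Real.log_exp]
    have := Real.log_le_log hA'₀ (Nat.cast_le.2 (card_le_card hA'A))
    push_cast
    linarith
  · have hsub : (#{g ∈ A' | g - x ∈ H} : ℝ) ≤ #{g ∈ A | g - x ∈ H} := by gcongr
    refine le_trans ?_ hsub
    rw [sum_filter_uniformWeight, le_div_iff₀ hA'₀] at hmass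
    refine le_trans ?_ hmass
    rw [hexp, ← Real.exp_log hA₀, ← Real.exp_log hA'₀, ← Real.exp_add, ← Real.exp_add,
      Real.exp_le_exp]
    push_cast
    linarith

section AdditiveTriples

variable {G : Type*} [Fintype G] [AddCommGroup G]

/-- The pairs `(x, y)` for which `x`, `y` and `x + y` all lie in `A`. -/
noncomputable def additiveTriples (A : Finset G) : Finset (G × G) :=
  open scoped Classical in {t | t.1 ∈ A ∧ t.2 ∈ A ∧ t.1 + t.2 ∈ A}

lemma mem_additiveTriples {A : Finset G} {t : G × G} :
    t ∈ additiveTriples A ↔ t.1 ∈ A ∧ t.2 ∈ A ∧ t.1 + t.2 ∈ A := by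
  simp [additiveTriples]

lemma card_additiveTriples_le (A : Finset G) : #(additiveTriples A) ≤ #A ^ 2 := by
  rw [sq, ← card_product]
  exact card_le_card fun t ht =>
    mem_product.2 ⟨(mem_additiveTriples.1 ht).1, (mem_additiveTriples.1 ht).2.1⟩

lemma mul_mul_le_mul_add_of_le {a b c δ : ℝ} (ha : 0 ≤ a) (hb : 0 ≤ b) (hc : 0 ≤ c) (hδ : 0 ≤ δ)
    (h : a ≤ δ ∨ b ≤ δ ∨ c ≤ δ) : a * b * c ≤ δ * (b * c + a * c + a * b) := by
  have hbc := mul_nonneg hb hc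
  have hac := mul_nonneg ha hc
  have hab := mul_nonneg ha hb
  have := mul_nonneg hδ hbc
  have := mul_nonneg hδ hac
  have := mul_nonneg hδ hab
  rcases h with h | h | h
  · linarith [mul_le_mul_of_nonneg_right h hbc]
  · linarith [mul_le_mul_of_nonneg_right h hac]
  · linarith [mul_le_mul_of_nonneg_right h hab]

variable {a : G → ℝ} {γ : ℝ}

open scoped Classical in
lemma sum_mul_mul_le_card_additiveTriples (ha : ∀ x, a x ∈ Set.Icc 0 1) {δ : ℝ} (hδ : 0 ≤ δ) :
    ∑ x, ∑ y, a x * a y * a (x + y) ≤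
      #(additiveTriples ({x | δ ≤ a x} : Finset G)) + 3 * δ * (∑ x, a x) ^ 2 := by
  set E := additiveTriples ({x | δ ≤ a x} : Finset G)
  have hpoint (x y : G) : a x * a y * a (x + y) ≤ (if (x, y) ∈ E then 1 else 0) +
      δ * (a y * a (x + y) + a x * a (x + y) + a x * a y) := by
    obtain ⟨hx, hx'⟩ := ha x
    obtain ⟨hy, hy'⟩ := ha y
    obtain ⟨hxy, hxy'⟩ := ha (x + y)
    split_ifs with hE
    · have := mul_le_one₀ (mul_le_one₀ hx' hy hy') hxy hxy'
      have : 0 ≤ δ * (a y * a (x + y) + a x * a (x + y) + a x * a y) := by positivity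
      linarith
    · have hsmall : a x ≤ δ ∨ a y ≤ δ ∨ a (x + y) ≤ δ := by
        simp only [E, mem_additiveTriples, mem_filter, mem_univ, true_and] at hE
        grind
      rw [zero_add]
      exact mul_mul_le_mul_add_of_le hx hy hxy hδ hsmall
  have hshift_left (x : G) : ∑ y, a (x + y) = ∑ y, a y := Equiv.sum_comp (Equiv.addLeft x) a
  have hshift_right (y : G) : ∑ x, a (x + y) = ∑ x, a x := Equiv.sum_comp (Equiv.addRight y) a
  have hsum : ∑ x, ∑ y, a y * a (x + y) = (∑ x, a x) * ∑ x, a x := by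
    rw [sum_comm]
    simp only [← mul_sum, hshift_right, ← sum_mul]
  have hcard : ∑ x, ∑ y, (if (x, y) ∈ E then (1 : ℝ) else 0) = #E := by
    rw [← Fintype.sum_prod_type']
    simp
  calc ∑ x, ∑ y, a x * a y * a (x + y)
    _ ≤ ∑ x, ∑ y, ((if (x, y) ∈ E then 1 else 0) +
          δ * (a y * a (x + y) + a x * a (x + y) + a x * a y)) :=
        sum_le_sum fun x _ => sum_le_sum fun y _ => hpoint x y
    _ = #E + 3 * δ * (∑ x, a x) ^ 2 := by
        simp only [sum_add_distrib, ← mul_sum, hcard, hsum, hshift_left, ← sum_mul]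
        ring

lemma exists_dense_additiveTriples (ha : ∀ x, a x ∈ Set.Icc 0 1) (hγ : 0 < γ)
    (hN : 0 < ∑ x, a x) (h : γ ^ 2 * (∑ x, a x) ^ 2 ≤ ∑ x, ∑ y, a x * a y * a (x + y)) :
    ∃ A : Finset G, (∀ x ∈ A, γ ^ 2 / 6 ≤ a x) ∧ γ / 2 * ∑ x, a x ≤ #A ∧
      (additiveTriples A).Nonempty ∧ γ ^ 6 / 72 * #A ^ 2 ≤ (#(additiveTriples A) : ℝ) := by
  classical
  set N := ∑ x, a x
  set A : Finset G := {x | γ ^ 2 / 6 ≤ a x}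
  have hA (x : G) (hx : x ∈ A) : γ ^ 2 / 6 ≤ a x := (mem_filter.1 hx).2
  have hE : γ ^ 2 * N ^ 2 / 2 ≤ #(additiveTriples A) := by
    have := h.trans (sum_mul_mul_le_card_additiveTriples ha (by positivity : 0 ≤ γ ^ 2 / 6))
    linarith
  have hmarkov : γ ^ 2 / 6 * #A ≤ N := calc
    γ ^ 2 / 6 * #A = ∑ x ∈ A, γ ^ 2 / 6 := by rw [sum_const, nsmul_eq_mul, mul_comm]
    _ ≤ ∑ x ∈ A, a x := sum_le_sum hA
    _ ≤ N := sum_le_univ_sum_of_nonneg fun x => (ha x).1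
  refine ⟨A, hA, ?_, ?_, ?_⟩
  · have hEA : (#(additiveTriples A) : ℝ) ≤ #A ^ 2 := mod_cast card_additiveTriples_le A
    refine le_of_sq_le_sq ?_ (Nat.cast_nonneg _)
    nlinarith [hE.trans hEA, sq_nonneg (γ * N)]
  · have : 0 < γ ^ 2 * N ^ 2 / 2 := by positivity
    exact card_pos.1 (Nat.cast_pos.1 (this.trans_le hE))
  · calc γ ^ 6 / 72 * (#A : ℝ) ^ 2 = γ ^ 2 * (γ ^ 2 / 6 * #A) ^ 2 / 2 := by ring
      _ ≤ γ ^ 2 * N ^ 2 / 2 := by gcongr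
      _ ≤ #(additiveTriples A) := hE

lemma card_sup_span_singleton_le {K M : Type*} [Semiring K] [Finite K] [AddCommMonoid M]
    [Module K M] [Finite M] (H : Submodule K M) (x : M) :
    Nat.card ↥(H ⊔ Submodule.span K {x}) ≤ Nat.card K * Nat.card H := by
  rw [← Nat.card_prod]
  refine Nat.card_le_card_of_surjective (fun p : K × H => ⟨p.2 + p.1 • x, Submodule.add_mem_sup
    p.2.2 (Submodule.smul_mem _ _ (Submodule.mem_span_singleton_self x))⟩) ?_
  rintro ⟨v, hv⟩
  obtain ⟨u, hu, w, hw, rfl⟩ := Submodule.mem_sup.1 hv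
  obtain ⟨s, rfl⟩ := Submodule.mem_span_singleton.1 hw
  exact ⟨(s, ⟨u, hu⟩), rfl⟩

open scoped Classical in
lemma mul_card_le_sum_sup_span_singleton {K M : Type*} [Ring K] [AddCommGroup M] [Module K M]
    [Fintype M] {a : M → ℝ} (ha : ∀ x, 0 ≤ a x) {A : Finset M} {δ : ℝ} (hA : ∀ x ∈ A, δ ≤ a x)
    (H : Submodule K M) (x : M) :
    δ * #{g ∈ A | g - x ∈ H} ≤ ∑ g with g ∈ H ⊔ Submodule.span K {x}, a g := calc
  δ * #{g ∈ A | g - x ∈ H} = ∑ g ∈ A with g - x ∈ H, δ := by rw [sum_const, nsmul_eq_mul, mul_comm]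
  _ ≤ ∑ g ∈ A with g - x ∈ H, a g := sum_le_sum fun g hg => hA g (mem_filter.1 hg).1
  _ ≤ ∑ g with g ∈ H ⊔ Submodule.span K {x}, a g :=
    sum_le_sum_of_subset_of_nonneg (fun g hg => mem_filter.2 ⟨mem_univ g, by
      rw [← sub_add_cancel g x]
      exact Submodule.add_mem_sup (mem_filter.1 hg).2 (Submodule.mem_span_singleton_self x)⟩)
      fun g _ _ => ha g

open scoped Classical in
lemma exists_submodule_le_sq_sum [Module (ZMod 2) G] (ha : ∀ x, a x ∈ Set.Icc 0 1) (hγ : 0 < γ)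
    (hN : 0 < ∑ x, a x) (h : γ ^ 2 * (∑ x, a x) ^ 2 ≤ ∑ x, ∑ y, a x * a y * a (x + y)) :
    ∃ V : Submodule (ZMod 2) G,
      γ ^ 5 / 144 * (γ ^ 6 / 72) ^ 1064 * (∑ x, a x) * Nat.card V ≤ (∑ x with x ∈ V, a x) ^ 2 := by
  obtain ⟨A, hA, hAN, hE, hdense⟩ := exists_dense_additiveTriples ha hγ hN h
  set d : ℝ := #(additiveTriples A) / (#A : ℝ) ^ 2 with hd
  obtain ⟨H, x, hHA, hAH⟩ := exists_submodule_of_card_triples hE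
    (fun t => mem_additiveTriples.1) hd
  have hA₀ : (0 : ℝ) < #A := lt_of_lt_of_le (by positivity) hAN
  have hγd : γ ^ 6 / 72 ≤ d := (le_div_iff₀ (by positivity)).2 hdense
  set V := H ⊔ Submodule.span (ZMod 2) {x}
  have hVH : (Nat.card V : ℝ) ≤ 2 * Nat.card H := by
    have := card_sup_span_singleton_le H x
    rw [Nat.card_zmod] at this
    exact_mod_cast this
  have hcoset : γ ^ 2 / 6 * (#A * d ^ 356) ≤ ∑ x with x ∈ V, a x :=
    (mul_le_mul_of_nonneg_left hAH (by positivity)).trans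
      (mul_card_le_sum_sup_span_singleton (fun x => (ha x).1) hA H x)
  have hd₀ : 0 ≤ d := by positivity
  have hpow : (γ ^ 6 / 72) ^ 1064 ≤ d ^ 352 * (d ^ 356) ^ 2 := by
    rw [← pow_mul, ← pow_add]
    gcongr
  have hη : 0 ≤ (γ ^ 6 / 72) ^ 1064 := by positivity
  generalize (γ ^ 6 / 72) ^ 1064 = η at hpow hη ⊢
  refine ⟨V, ?_⟩
  calc γ ^ 5 / 144 * η * (∑ x, a x) * Nat.card V
    _ = (γ ^ 2 / 6) ^ 2 * (γ / 2 * ∑ x, a x) * η / 2 * Nat.card V := by ring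
    _ ≤ (γ ^ 2 / 6) ^ 2 * #A * (d ^ 352 * (d ^ 356) ^ 2) / 2 * (2 * Nat.card H) := by gcongr
    _ = (γ ^ 2 / 6) ^ 2 * #A * (d ^ 356) ^ 2 * (Nat.card H * d ^ 352) := by ring
    _ ≤ (γ ^ 2 / 6) ^ 2 * #A * (d ^ 356) ^ 2 * #A := by gcongr
    _ = (γ ^ 2 / 6 * (#A * d ^ 356)) ^ 2 := by ring
    _ ≤ (∑ x with x ∈ V, a x) ^ 2 := by gcongr

end AdditiveTriples

section WalshTransform

/-- The sign character `a ↦ (-1)ᵃ` of `𝔽₂`. -/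
noncomputable def signChar : AddChar (ZMod 2) ℝ :=
  AddChar.zmodChar 2 (neg_one_sq : (-1 : ℝ) ^ 2 = 1)

lemma signChar_apply (a : ZMod 2) : signChar a = (-1) ^ a.val :=
  AddChar.zmodChar_apply _ a

lemma abs_signChar (a : ZMod 2) : |signChar a| = 1 := by
  simp [signChar_apply]

lemma signChar_ne_one {a : ZMod 2} (ha : a ≠ 0) : signChar a ≠ 1 := by
  rw [signChar_apply, ZMod.val_eq_one one_lt_two a |>.2 (Fin.eq_one_of_ne_zero a ha)]
  norm_num

lemma signChar_mul_self (a : ZMod 2) : signChar a * signChar a = 1 := by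
  rw [← AddChar.map_add_eq_mul, ZModModule.add_self, AddChar.map_zero_eq_one]

lemma ofReal_signChar_mul_self (a : ZMod 2) : (signChar a * signChar a : ℂ) = 1 :=
  mod_cast signChar_mul_self a

lemma sum_signChar_eq_zero {M : Type*} [AddCommGroup M] [Fintype M] {φ : M →+ ZMod 2}
    (hφ : φ ≠ 0) : ∑ x, signChar (φ x) = 0 := by
  obtain ⟨x, hx⟩ := DFunLike.ne_iff.1 hφ
  exact AddChar.sum_eq_zero_of_ne_one (ψ := signChar.compAddMonoidHom φ)
    (AddChar.ne_one_iff.2 ⟨x, signChar_ne_one hx⟩)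

variable {n : ℕ}

/-- The binary vector space `𝔽₂ⁿ`. -/
abbrev BinVec (n : ℕ) := Fin n → ZMod 2

lemma sum_signChar_dotProduct (u : BinVec n) :
    ∑ w, signChar (w ⬝ᵥ u) = if u = 0 then (2 : ℝ) ^ n else 0 := by
  split_ifs with hu
  · simp [hu]
  · refine sum_signChar_eq_zero
      (φ := { toFun := (· ⬝ᵥ u)
              map_zero' := zero_dotProduct u
              map_add' := (add_dotProduct · · u) })
      fun h => hu (dotProduct_eq_zero u fun w => ?_)
    rw [dotProduct_comm]
    exact DFunLike.congr_fun h w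

/-- The (unnormalised) Walsh–Hadamard transform of `g`. -/
noncomputable def walshTransform (g : BinVec n → ℂ) (w : BinVec n) : ℂ :=
  ∑ y, g y * signChar (w ⬝ᵥ y)

open ComplexConjugate in
lemma norm_sq_walshTransform (g : BinVec n → ℂ) (w : BinVec n) :
    (‖walshTransform g w‖ ^ 2 : ℂ) = ∑ v, signChar (w ⬝ᵥ v) * ∑ y, g y * conj (g (y + v)) := by
  have hsign (y v : BinVec n) :
      signChar (w ⬝ᵥ y) * signChar (w ⬝ᵥ (y + v)) = signChar (w ⬝ᵥ v) := by
    rw [dotProduct_add, AddChar.map_add_eq_mul, ← mul_assoc, signChar_mul_self, one_mul]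
  calc (‖walshTransform g w‖ ^ 2 : ℂ)
    _ = ∑ y, ∑ z, g y * signChar (w ⬝ᵥ y) * conj (g z * signChar (w ⬝ᵥ z)) := by
        rw [← Complex.mul_conj', walshTransform, map_sum, sum_mul_sum]
    _ = ∑ y, ∑ v, signChar (w ⬝ᵥ v) * (g y * conj (g (y + v))) :=
        sum_congr rfl fun y _ => .symm <| Fintype.sum_equiv (Equiv.addLeft y) _ _ fun v => by
          simp only [Equiv.coe_addLeft, map_mul, Complex.conj_ofReal, ← hsign y v]
          push_cast
          ring
    _ = ∑ v, signChar (w ⬝ᵥ v) * ∑ y, g y * conj (g (y + v)) := by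
        rw [sum_comm]
        simp only [mul_sum]

open ComplexConjugate in
lemma sum_signChar_mul_norm_sq_walshTransform (g : BinVec n → ℂ) (u : BinVec n) :
    ∑ w, (signChar (w ⬝ᵥ u) * ‖walshTransform g w‖ ^ 2 : ℂ) =
      2 ^ n * ∑ y, g y * conj (g (y + u)) := by
  have horth (v : BinVec n) :
      ∑ w, (signChar (w ⬝ᵥ u) * signChar (w ⬝ᵥ v) : ℂ) = if u = v then 2 ^ n else 0 := by
    have := sum_signChar_dotProduct (u + v)
    simp only [dotProduct_add, AddChar.map_add_eq_mul, add_eq_zero_iff_eq_neg,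
      ZModModule.neg_eq_self] at this
    simpa [apply_ite ((↑) : ℝ → ℂ)] using congrArg ((↑) : ℝ → ℂ) this
  simp only [norm_sq_walshTransform, mul_sum (s := univ (α := BinVec n)), ← mul_assoc]
  rw [sum_comm]
  simp only [mul_assoc, ← mul_sum]
  simp only [← mul_assoc, ← sum_mul, horth, ite_mul, zero_mul, sum_ite_eq, mem_univ, if_true]

end WalshTransform

section WeylCoefficients

variable {n : ℕ}

/-- Phase space `𝔽₂²ⁿ`, which labels the Weyl operators on `n` qubits. -/
abbrev PhaseSpace (n : ℕ) := BinVec n × BinVec n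

open ComplexConjugate in
/-- The multiplicative derivative of `f` in direction `v`. -/
noncomputable def mulDeriv (f : BinVec n → ℂ) (v y : BinVec n) : ℂ :=
  f y * conj (f (y + v))

/-- The expectation, up to a phase, of the Weyl operator labelled by `x` in the state `f`. -/
noncomputable def weylCoeff (f : BinVec n → ℂ) (x : PhaseSpace n) : ℂ :=
  walshTransform (mulDeriv f x.1) x.2

lemma charDist_eq (f : BinVec n → ℂ) (x : PhaseSpace n) :
    charDist n f x = (2 ^ n)⁻¹ * ‖weylCoeff f x‖ ^ 2 := by
  simp only [charDist, weylCoeff, walshTransform, mulDeriv, signChar_apply, dotProduct]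
  push_cast
  rfl

lemma sympl_eq (x y : PhaseSpace n) : sympl n x y = x.1 ⬝ᵥ y.2 + x.2 ⬝ᵥ y.1 := rfl

lemma sympl_comm (x y : PhaseSpace n) : sympl n x y = sympl n y x := by
  rw [sympl_eq, sympl_eq, dotProduct_comm x.1, dotProduct_comm x.2, add_comm]

/-- The symplectic product as a bilinear form. -/
noncomputable def symplForm (n : ℕ) : LinearMap.BilinForm (ZMod 2) (PhaseSpace n) :=
  LinearMap.mk₂ (ZMod 2) (sympl n)
    (fun x y z => by simp only [sympl_eq, Prod.fst_add, Prod.snd_add, add_dotProduct]; ring)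
    (fun c x y => by simp only [sympl_eq, Prod.smul_fst, Prod.smul_snd, smul_dotProduct, smul_add])
    (fun x y z => by simp only [sympl_eq, Prod.fst_add, Prod.snd_add, dotProduct_add]; ring)
    (fun c x y => by simp only [sympl_eq, Prod.smul_fst, Prod.smul_snd, dotProduct_smul, smul_add])

lemma sympl_add_left (x y z : PhaseSpace n) : sympl n (x + y) z = sympl n x z + sympl n y z :=
  (symplForm n).map_add₂ x y z

lemma sympl_add_right (x y z : PhaseSpace n) : sympl n x (y + z) = sympl n x y + sympl n x z :=
  (symplForm n x).map_add y z

lemma sympl_zero_left (x : PhaseSpace n) : sympl n 0 x = 0 :=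
  (symplForm n).map_zero₂ x

lemma isAlt_symplForm : (symplForm n).IsAlt := fun x => by
  change sympl n x x = 0
  rw [sympl_eq, dotProduct_comm x.1, ZModModule.add_self]

lemma nondegenerate_symplForm : (symplForm n).Nondegenerate := by
  refine (isAlt_symplForm.isRefl.nondegenerate_iff_separatingLeft).2 fun x hx => ?_
  have hx' (y : PhaseSpace n) : x.1 ⬝ᵥ y.2 + x.2 ⬝ᵥ y.1 = 0 := hx y
  refine Prod.ext (dotProduct_eq_zero _ fun w => ?_) (dotProduct_eq_zero _ fun w => ?_)
  · simpa using hx' (0, w)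
  · simpa using hx' (w, 0)

open ComplexConjugate in
lemma mulDeriv_mul_conj_mulDeriv (f : BinVec n → ℂ) (u v y : BinVec n) :
    mulDeriv f v y * conj (mulDeriv f v (y + u)) =
      mulDeriv f u y * conj (mulDeriv f u (y + v)) := by
  simp only [mulDeriv, map_mul, add_right_comm y u v]
  ring

lemma sum_signChar_sympl_mul_norm_sq_weylCoeff (f : BinVec n → ℂ) (x : PhaseSpace n) :
    ∑ y, signChar (sympl n x y) * ‖weylCoeff f y‖ ^ 2 = 2 ^ n * ‖weylCoeff f x‖ ^ 2 := by
  suffices ∑ y, (signChar (sympl n x y) * ‖weylCoeff f y‖ ^ 2 : ℂ) = 2 ^ n * ‖weylCoeff f x‖ ^ 2 by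
    exact_mod_cast this
  calc ∑ y, (signChar (sympl n x y) * ‖weylCoeff f y‖ ^ 2 : ℂ)
    _ = ∑ v, signChar (x.2 ⬝ᵥ v) *
          ∑ w, (signChar (w ⬝ᵥ x.1) * ‖walshTransform (mulDeriv f v) w‖ ^ 2 : ℂ) := by
        rw [Fintype.sum_prod_type]
        refine sum_congr rfl fun v _ => ?_
        rw [mul_sum]
        refine sum_congr rfl fun w _ => ?_
        rw [sympl_eq, AddChar.map_add_eq_mul, dotProduct_comm x.1, weylCoeff]
        push_cast
        ring
    _ = 2 ^ n * ‖weylCoeff f x‖ ^ 2 := by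
        simp only [sum_signChar_mul_norm_sq_walshTransform, mulDeriv_mul_conj_mulDeriv f x.1,
          mul_left_comm _ ((2 : ℂ) ^ n), ← mul_sum]
        rw [← norm_sq_walshTransform, weylCoeff]

lemma weylCoeff_zero {f : BinVec n → ℂ} (hf : ∑ y, ‖f y‖ ^ 2 = 1) : weylCoeff f 0 = 1 := by
  simp only [weylCoeff, walshTransform, mulDeriv, Prod.fst_zero, Prod.snd_zero, add_zero,
    zero_dotProduct, AddChar.map_zero_eq_one, Complex.ofReal_one, mul_one, Complex.mul_conj']
  exact_mod_cast hf

lemma sum_norm_sq_weylCoeff {f : BinVec n → ℂ} (hf : ∑ y, ‖f y‖ ^ 2 = 1) :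
    ∑ x, ‖weylCoeff f x‖ ^ 2 = 2 ^ n := by
  simpa [sympl_zero_left, weylCoeff_zero hf] using sum_signChar_sympl_mul_norm_sq_weylCoeff f 0

lemma norm_sq_weylCoeff_le_one {f : BinVec n → ℂ} (hf : ∑ y, ‖f y‖ ^ 2 = 1) (x : PhaseSpace n) :
    ‖weylCoeff f x‖ ^ 2 ≤ 1 := by
  refine le_of_mul_le_mul_left ?_ (by positivity : (0 : ℝ) < 2 ^ n)
  calc 2 ^ n * ‖weylCoeff f x‖ ^ 2
    _ = ∑ y, signChar (sympl n x y) * ‖weylCoeff f y‖ ^ 2 :=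
        (sum_signChar_sympl_mul_norm_sq_weylCoeff f x).symm
    _ ≤ ∑ y, ‖weylCoeff f y‖ ^ 2 := sum_le_sum fun y _ =>
        mul_le_of_le_one_left (by positivity) ((le_abs_self _).trans_eq (abs_signChar _))
    _ = 2 ^ n * 1 := by rw [sum_norm_sq_weylCoeff hf, mul_one]

lemma sum_sum_norm_sq_weylCoeff_mul (f : BinVec n → ℂ) :
    ∑ x, ∑ y, ‖weylCoeff f x‖ ^ 2 * ‖weylCoeff f y‖ ^ 2 * ‖weylCoeff f (x + y)‖ ^ 2 =
      2 ^ n * ∑ x, (‖weylCoeff f x‖ ^ 2) ^ 3 := by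
  set b := fun x => ‖weylCoeff f x‖ ^ 2
  have hdual (x : PhaseSpace n) : ∑ y, signChar (sympl n x y) * b y = 2 ^ n * b x :=
    sum_signChar_sympl_mul_norm_sq_weylCoeff f x
  have hmul (x y z : PhaseSpace n) :
      signChar (sympl n (x + y) z) = signChar (sympl n z x) * signChar (sympl n z y) := by
    rw [sympl_add_left, AddChar.map_add_eq_mul, sympl_comm x, sympl_comm y]
  refine mul_left_cancel₀ (by positivity : (2 : ℝ) ^ n ≠ 0) ?_
  calc 2 ^ n * ∑ x, ∑ y, b x * b y * b (x + y)
    _ = ∑ x, ∑ y, ∑ z, (signChar (sympl n z x) * b x) * (signChar (sympl n z y) * b y) * b z := by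
        simp only [mul_sum, mul_left_comm ((2 : ℝ) ^ n), ← hdual, hmul]
        exact sum_congr rfl fun x _ => sum_congr rfl fun y _ => sum_congr rfl fun z _ => by ring
    _ = ∑ z, (∑ x, signChar (sympl n z x) * b x) * (∑ y, signChar (sympl n z y) * b y) * b z := by
        simp_rw [sum_mul_sum, sum_mul]
        exact sum_comm_cycle
    _ = 2 ^ n * (2 ^ n * ∑ z, b z ^ 3) := by
        simp only [hdual, mul_sum]
        exact sum_congr rfl fun z _ => by ring

lemma sq_mul_le_sum_sum_norm_sq_weylCoeff_mul {f : BinVec n → ℂ} (hf : ∑ y, ‖f y‖ ^ 2 = 1) {γ : ℝ}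
    (hγ : 0 ≤ γ) (h : γ * 2 ^ n ≤ ∑ x, (‖weylCoeff f x‖ ^ 2) ^ 2) :
    γ ^ 2 * (∑ x, ‖weylCoeff f x‖ ^ 2) ^ 2 ≤
      ∑ x, ∑ y, ‖weylCoeff f x‖ ^ 2 * ‖weylCoeff f y‖ ^ 2 * ‖weylCoeff f (x + y)‖ ^ 2 := calc
  γ ^ 2 * (∑ x, ‖weylCoeff f x‖ ^ 2) ^ 2 = (γ * 2 ^ n) ^ 2 := by
    rw [sum_norm_sq_weylCoeff hf, mul_pow]
  _ ≤ (∑ x, (‖weylCoeff f x‖ ^ 2) ^ 2) ^ 2 := by gcongr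
  _ = (∑ x, ‖weylCoeff f x‖ * ‖weylCoeff f x‖ ^ 3) ^ 2 := by simp only [← pow_succ', ← pow_mul]
  _ ≤ (∑ x, ‖weylCoeff f x‖ ^ 2) * ∑ x, (‖weylCoeff f x‖ ^ 3) ^ 2 := sum_mul_sq_le_sq_mul_sq _ _ _
  _ = 2 ^ n * ∑ x, (‖weylCoeff f x‖ ^ 2) ^ 3 := by
    simp only [sum_norm_sq_weylCoeff hf, ← pow_mul, mul_comm]
  _ = ∑ x, ∑ y, ‖weylCoeff f x‖ ^ 2 * ‖weylCoeff f y‖ ^ 2 * ‖weylCoeff f (x + y)‖ ^ 2 :=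
    (sum_sum_norm_sq_weylCoeff_mul f).symm

end WeylCoefficients

section Uncertainty

variable {n : ℕ}

/-- The Weyl operator labelled by `x`, acting on amplitude vectors. -/
noncomputable def weylOp (x : PhaseSpace n) (f : BinVec n → ℂ) (y : BinVec n) : ℂ :=
  signChar (x.2 ⬝ᵥ y) * f (y + x.1)

open ComplexConjugate in
lemma conj_weylCoeff (f : BinVec n → ℂ) (x : PhaseSpace n) :
    conj (weylCoeff f x) = signChar (x.2 ⬝ᵥ x.1) * weylCoeff f x := by
  simp only [weylCoeff, walshTransform, mulDeriv, map_sum, mul_sum]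
  refine Fintype.sum_equiv (Equiv.addRight x.1) _ _ fun y => ?_
  simp only [Equiv.coe_addRight, map_mul, Complex.conj_conj, Complex.conj_ofReal, dotProduct_add,
    AddChar.map_add_eq_mul, add_assoc, ZModModule.add_self, add_zero]
  push_cast
  linear_combination (-conj (f y) * f (y + x.1) * signChar (x.2 ⬝ᵥ y)) *
    ofReal_signChar_mul_self (x.2 ⬝ᵥ x.1)

lemma weylCoeff_sq (f : BinVec n → ℂ) (x : PhaseSpace n) :
    weylCoeff f x ^ 2 = signChar (x.2 ⬝ᵥ x.1) * ‖weylCoeff f x‖ ^ 2 := by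
  rw [← Complex.mul_conj', conj_weylCoeff]
  linear_combination -weylCoeff f x ^ 2 * ofReal_signChar_mul_self (x.2 ⬝ᵥ x.1)

open ComplexConjugate in
lemma sum_conj_weylOp_mul_weylOp (f : BinVec n → ℂ) (x x' : PhaseSpace n) :
    ∑ y, conj (weylOp x f y) * weylOp x' f y =
      signChar ((x + x').2 ⬝ᵥ x'.1) * weylCoeff f (x + x') := by
  simp only [weylCoeff, walshTransform, mulDeriv, mul_sum]
  refine Fintype.sum_equiv (Equiv.addRight x'.1) _ _ fun y => ?_
  have hshift : y + x'.1 + (x + x').1 = y + x.1 := by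
    rw [Prod.fst_add, add_comm x.1, add_assoc, ← add_assoc x'.1, ZModModule.add_self, zero_add]
  have hsign : signChar ((x + x').2 ⬝ᵥ x'.1) * signChar ((x + x').2 ⬝ᵥ (y + x'.1)) =
      signChar (x.2 ⬝ᵥ y) * signChar (x'.2 ⬝ᵥ y) := by
    rw [dotProduct_add, AddChar.map_add_eq_mul, mul_left_comm, signChar_mul_self, mul_one,
      Prod.snd_add, add_dotProduct, AddChar.map_add_eq_mul]
  simp only [Equiv.coe_addRight, hshift]
  calc conj (weylOp x f y) * weylOp x' f y
    _ = ((signChar (x.2 ⬝ᵥ y) * signChar (x'.2 ⬝ᵥ y) : ℝ) : ℂ) *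
          (f (y + x'.1) * conj (f (y + x.1))) := by
        simp only [weylOp, map_mul, Complex.conj_ofReal]
        push_cast
        ring
    _ = _ := by
        rw [← hsign]
        push_cast
        ring

/-- The vector `W ⊗ W (f ⊗ f)` for the Weyl operator `W` labelled by `x`, with the phase that makes
`W ⊗ W` Hermitian. -/
noncomputable def weylPair (f : BinVec n → ℂ) (x : PhaseSpace n) :
    EuclideanSpace ℂ (PhaseSpace n) :=
  WithLp.toLp 2 fun t => signChar (x.2 ⬝ᵥ x.1) * (weylOp x f t.1 * weylOp x f t.2)

lemma inner_weylPair (f : BinVec n → ℂ) (x x' : PhaseSpace n) :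
    inner ℂ (weylPair f x) (weylPair f x') =
      ((signChar (sympl n x x') * ‖weylCoeff f (x + x')‖ ^ 2 : ℝ) : ℂ) := by
  set z := x + x'
  have hphase : sympl n x x' = x.2 ⬝ᵥ x.1 + x'.2 ⬝ᵥ x'.1 + z.2 ⬝ᵥ z.1 := by
    simp only [z, sympl_eq, Prod.fst_add, Prod.snd_add, dotProduct_add, add_dotProduct,
      dotProduct_comm x.1]
    linear_combination -ZModModule.add_self (x.2 ⬝ᵥ x.1) - ZModModule.add_self (x'.2 ⬝ᵥ x'.1)
  calc inner ℂ (weylPair f x) (weylPair f x')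
    _ = signChar (x.2 ⬝ᵥ x.1) * signChar (x'.2 ⬝ᵥ x'.1) *
          (∑ y, starRingEnd ℂ (weylOp x f y) * weylOp x' f y) ^ 2 := by
        rw [sq, sum_mul_sum, PiLp.inner_apply, Fintype.sum_prod_type]
        simp only [mul_sum]
        refine sum_congr rfl fun y _ => sum_congr rfl fun y' _ => ?_
        simp only [weylPair, RCLike.inner_apply, map_mul, Complex.conj_ofReal]
        ring
    _ = signChar (x.2 ⬝ᵥ x.1) * signChar (x'.2 ⬝ᵥ x'.1) * weylCoeff f z ^ 2 := by
        rw [sum_conj_weylOp_mul_weylOp, mul_pow, sq (signChar _ : ℂ),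
          ofReal_signChar_mul_self, one_mul]
    _ = _ := by
        rw [weylCoeff_sq, hphase, AddChar.map_add_eq_mul, AddChar.map_add_eq_mul]
        push_cast
        ring

open scoped Classical in
lemma sum_coe_submodule {R M : Type*} [Semiring R] [AddCommMonoid M] [Module R M] [Fintype M]
    (V : Submodule R M) (g : M → ℝ) : ∑ x : V, g x = ∑ x with x ∈ V, g x :=
  (sum_subtype _ (by simp) g).symm

open scoped Classical in
lemma sum_signChar_sympl (V : Submodule (ZMod 2) (PhaseSpace n)) (u : PhaseSpace n) :
    ∑ x : V, signChar (sympl n x u) =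
      if u ∈ (symplForm n).orthogonal V then (Nat.card V : ℝ) else 0 := by
  split_ifs with hu
  · have hu (x : V) : sympl n x u = 0 := hu x x.2
    simp [hu]
  · refine sum_signChar_eq_zero
      (φ := (((symplForm n).flip u).comp V.subtype).toAddMonoidHom) fun h => hu fun x hx => ?_
    exact DFunLike.congr_fun h ⟨x, hx⟩

open scoped Classical in
lemma sum_sum_signChar_sympl_mul (V : Submodule (ZMod 2) (PhaseSpace n)) (b : PhaseSpace n → ℝ) :
    ∑ x : V, ∑ y : V, signChar (sympl n x y) * b (x + y) =
      Nat.card V * ∑ u with u ∈ V ⊓ (symplForm n).orthogonal V, b u := by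
  have hself (x : PhaseSpace n) : sympl n x x = 0 := isAlt_symplForm x
  calc ∑ x : V, ∑ y : V, signChar (sympl n x y) * b (x + y)
    _ = ∑ x : V, ∑ u : V, signChar (sympl n x u) * b u :=
        sum_congr rfl fun x _ => Fintype.sum_equiv (Equiv.addLeft x) _ _ fun y => by
          rw [Equiv.coe_addLeft, Submodule.coe_add, sympl_add_right, hself, zero_add]
    _ = ∑ u : V,
          if (u : PhaseSpace n) ∈ (symplForm n).orthogonal V then Nat.card V * b u else 0 := by
        rw [sum_comm]
        simp only [← sum_mul, sum_signChar_sympl, ite_mul, zero_mul]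
    _ = ∑ u with u ∈ V, if u ∈ (symplForm n).orthogonal V then Nat.card V * b u else 0 :=
        sum_coe_submodule V fun u => if u ∈ (symplForm n).orthogonal V then Nat.card V * b u else 0
    _ = _ := by
        simp only [mul_sum, ← sum_filter, filter_filter, Submodule.mem_inf]

open scoped Classical in
/-- Up to the factor `|V|`, the mass of a subspace `V` is carried by its radical: Cauchy–Schwarz for
`f ⊗ f` against the sum over `V` of the vectors `weylPair f x`. -/
lemma sq_sum_norm_sq_weylCoeff_le {f : BinVec n → ℂ} (hf : ∑ y, ‖f y‖ ^ 2 = 1)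
    (V : Submodule (ZMod 2) (PhaseSpace n)) :
    (∑ x with x ∈ V, ‖weylCoeff f x‖ ^ 2) ^ 2 ≤
      Nat.card V * ∑ u with u ∈ V ⊓ (symplForm n).orthogonal V, ‖weylCoeff f u‖ ^ 2 := by
  set S := ∑ x : V, weylPair f x
  have hinner : inner ℂ (weylPair f 0) S = ((∑ x with x ∈ V, ‖weylCoeff f x‖ ^ 2 : ℝ) : ℂ) := by
    rw [← sum_coe_submodule]
    simp only [S, inner_sum, inner_weylPair, sympl_zero_left, zero_add, AddChar.map_zero_eq_one,
      one_mul, Complex.ofReal_sum]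
  have hnorm : ‖S‖ ^ 2 =
      Nat.card V * ∑ u with u ∈ V ⊓ (symplForm n).orthogonal V, ‖weylCoeff f u‖ ^ 2 := by
    rw [← sum_sum_signChar_sympl_mul, @norm_sq_eq_re_inner ℂ, sum_inner]
    simp only [S, inner_sum, inner_weylPair, ← Complex.ofReal_sum, RCLike.re_to_complex,
      Complex.ofReal_re]
  have hnorm_zero : ‖weylPair f 0‖ ^ 2 = 1 := by
    rw [@norm_sq_eq_re_inner ℂ, inner_weylPair, sympl_zero_left, add_zero, weylCoeff_zero hf]
    simp
  calc (∑ x with x ∈ V, ‖weylCoeff f x‖ ^ 2) ^ 2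
    _ = ‖inner ℂ (weylPair f 0) S‖ ^ 2 := by
        rw [hinner, Complex.norm_real, Real.norm_eq_abs, sq_abs]
    _ ≤ (‖weylPair f 0‖ * ‖S‖) ^ 2 := by
        gcongr
        exact norm_inner_le_norm _ _
    _ = _ := by rw [mul_pow, hnorm_zero, one_mul, hnorm]

end Uncertainty

section Lagrangian

lemma sup_span_singleton_le_orthogonal {R M : Type*} [CommRing R] [AddCommGroup M] [Module R M]
    {B : LinearMap.BilinForm R M} (hB : B.IsAlt) {W : Submodule R M} (hW : W ≤ B.orthogonal W)
    {x : M} (hx : x ∈ B.orthogonal W) :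
    W ⊔ Submodule.span R {x} ≤ B.orthogonal (W ⊔ Submodule.span R {x}) := by
  rintro y hy z hz
  obtain ⟨v, hv, _, hr, rfl⟩ := Submodule.mem_sup.1 hy
  obtain ⟨r, rfl⟩ := Submodule.mem_span_singleton.1 hr
  obtain ⟨w, hw, _, hs, rfl⟩ := Submodule.mem_sup.1 hz
  obtain ⟨s, rfl⟩ := Submodule.mem_span_singleton.1 hs
  have hwv : B w v = 0 := hW hv w hw
  have hwx : B w x = 0 := hx w hw
  have hxv : B x v = 0 := hB.isRefl v x (hx v hv)
  simp [hwv, hwx, hxv, hB x]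

lemma exists_orthogonal_eq_self_of_le_orthogonal {R M : Type*} [CommRing R] [AddCommGroup M]
    [Module R M] [IsNoetherian R M] {B : LinearMap.BilinForm R M} (hB : B.IsAlt)
    {W : Submodule R M} (hW : W ≤ B.orthogonal W) : ∃ L, W ≤ L ∧ B.orthogonal L = L := by
  obtain ⟨L, hWL, hL⟩ := exists_maximal_ge_of_wellFoundedGT (fun L => L ≤ B.orthogonal L) W hW
  refine ⟨L, hWL, le_antisymm (fun x hx => ?_) hL.prop⟩
  exact hL.le_of_ge (sup_span_singleton_le_orthogonal hB hL.prop hx) le_sup_left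
    (Submodule.mem_sup_right (Submodule.mem_span_singleton_self x))

lemma isLagrangian_of_orthogonal_eq_self {n : ℕ} {L : Submodule (ZMod 2) (PhaseSpace n)}
    (hL : (symplForm n).orthogonal L = L) : IsLagrangian n L := by
  have hrank := LinearMap.BilinForm.finrank_orthogonal nondegenerate_symplForm L
  have hle := L.finrank_le
  rw [hL] at hrank
  simp only [Module.finrank_prod, Module.finrank_fin_fun] at hrank hle
  exact ⟨by convert (by omega : Module.finrank (ZMod 2) L = n),
    fun x hx y hy => hL.ge hy x hx⟩

lemma inf_orthogonal_le_orthogonal_inf {R M : Type*} [CommRing R] [AddCommGroup M] [Module R M]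
    (B : LinearMap.BilinForm R M) (V : Submodule R M) :
    V ⊓ B.orthogonal V ≤ B.orthogonal (V ⊓ B.orthogonal V) :=
  inf_le_right.trans (LinearMap.BilinForm.orthogonal_le inf_le_left)

open scoped Classical in
lemma exists_isLagrangian_le_sum_charDist {n : ℕ} {f : BinVec n → ℂ} (hf : ∑ y, ‖f y‖ ^ 2 = 1)
    {γ : ℝ} (hγ : 0 < γ) (h : γ ≤ 2 ^ n * ∑ x, charDist n f x ^ 2) :
    ∃ L : Submodule (ZMod 2) (PhaseSpace n), IsLagrangian n L ∧
      γ ^ 5 / 144 * (γ ^ 6 / 72) ^ 1064 ≤ ∑ x : L, charDist n f x := by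
  have hmass : ∑ x, ‖weylCoeff f x‖ ^ 2 = 2 ^ n := sum_norm_sq_weylCoeff hf
  have hfourth : γ * 2 ^ n ≤ ∑ x, (‖weylCoeff f x‖ ^ 2) ^ 2 := by
    rw [← le_div_iff₀ (by positivity)]
    refine h.trans_eq ?_
    simp only [charDist_eq, mul_pow, ← mul_sum]
    field_simp
  obtain ⟨V, hV⟩ := exists_submodule_le_sq_sum
    (fun x => ⟨sq_nonneg ‖weylCoeff f x‖, norm_sq_weylCoeff_le_one hf x⟩) hγ
    (by rw [hmass]; positivity) (sq_mul_le_sum_sum_norm_sq_weylCoeff_mul hf hγ.le hfourth)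
  obtain ⟨L, hVL, hL⟩ := exists_orthogonal_eq_self_of_le_orthogonal isAlt_symplForm
    (inf_orthogonal_le_orthogonal_inf (symplForm n) V)
  refine ⟨L, isLagrangian_of_orthogonal_eq_self hL, ?_⟩
  rw [hmass] at hV
  generalize γ ^ 5 / 144 * (γ ^ 6 / 72) ^ 1064 = κ at hV ⊢
  have hV₀ : (0 : ℝ) < Nat.card V := by exact_mod_cast Nat.card_pos
  simp only [charDist_eq, ← mul_sum]
  rw [← div_eq_inv_mul, le_div_iff₀ (by positivity),
    sum_coe_submodule L fun x => ‖weylCoeff f x‖ ^ 2]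
  refine le_of_mul_le_mul_right ?_ hV₀
  calc κ * 2 ^ n * Nat.card V
    _ ≤ (∑ x with x ∈ V, ‖weylCoeff f x‖ ^ 2) ^ 2 := hV
    _ ≤ Nat.card V * ∑ x with x ∈ V ⊓ (symplForm n).orthogonal V, ‖weylCoeff f x‖ ^ 2 :=
        sq_sum_norm_sq_weylCoeff_le hf V
    _ ≤ Nat.card V * ∑ x with x ∈ L, ‖weylCoeff f x‖ ^ 2 := by
        gcongr
    _ = _ := mul_comm _ _

end Lagrangian

open scoped Classical in
/-- inverse theorem for the Gowers-3 norm of quantum states. -/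
theorem stmt_14 :
    ∃ c : ℝ, 0 < c ∧ ∃ C : ℝ, 1 ≤ C ∧
      ∀ n : ℕ, 1 ≤ n → ∀ γ : ℝ, γ ∈ Set.Ioc (0 : ℝ) 1 →
        ∀ f : (Fin n → ZMod 2) → ℂ, (∑ x : Fin n → ZMod 2, ‖f x‖ ^ 2 = 1) →
          (2 : ℝ) ^ n * (∑ x : (Fin n → ZMod 2) × (Fin n → ZMod 2),
              (charDist n f x) ^ 2) ≥ γ →
          ∃ L : Submodule (ZMod 2) ((Fin n → ZMod 2) × (Fin n → ZMod 2)),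
            IsLagrangian n L ∧
            c * γ ^ C ≤
              ∑ x : L, charDist n f (x : (Fin n → ZMod 2) × (Fin n → ZMod 2)) := by
  have hconst (k : ℕ) (γ : ℝ) :
      γ ^ 5 / 144 * (γ ^ 6 / 72) ^ k = (144 * 72 ^ k)⁻¹ * γ ^ (5 + 6 * k) := by
    rw [div_pow, pow_add, pow_mul, mul_inv]
    ring
  refine ⟨(144 * 72 ^ 1064)⁻¹, by positivity, (5 + 6 * 1064 : ℕ), by norm_num,
    fun n _ γ hγ f hf h => ?_⟩
  obtain ⟨L, hL, hbound⟩ := exists_isLagrangian_le_sum_charDist hf hγ.1 h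
  exact ⟨L, hL, by rwa [Real.rpow_natCast, ← hconst]⟩
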